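/- arXiv:2305.19944 — 8 statements merged into one kernel-verified Lean document; each statement's English description precedes it below -/
import Mathlib

section
/- For all integers k, l, m, n with 0 ≤ l ≤ k, 1 ≤ m, 1 ≤ n and m dividing n, the polynomial f_{l,m} divides f_{k,n} in ℤ[a,b]. -/
/-! Since `x - y` divides `f(x) - f(y)`, each `f_{k,m}` divides `f_{k+1,m}`, hence `f_{l,m}` divides
`f_{k,m}` for all `k ≥ l`. For `n = m * q`, the polynomial `f_{k,n}` is the telescoping sum of the
`f_{k+m*i,m}` with `i < q`, each of which is divisible by `f_{l,m}`. -/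

open MvPolynomial

/-- The marked critical point `a` as an element of `ℤ[a,b]`. -/
noncomputable def aP : MvPolynomial (Fin 2) ℤ := X 0

/-- The variable `b` as an element of `ℤ[a,b]`. -/
noncomputable def bP : MvPolynomial (Fin 2) ℤ := X 1

/-- `P m = f^m(a)` for `f(z) = z³ - 3a²z + 2a³ + b`. -/
noncomputable def P : ℕ → MvPolynomial (Fin 2) ℤ
  | 0 => aP
  | m + 1 => (P m) ^ 3 - 3 * aP ^ 2 * (P m) + 2 * aP ^ 3 + bP

/-- `f_{k,n} = f^{k+n}(a) - f^k(a)`. -/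
noncomputable def fkn (k n : ℕ) : MvPolynomial (Fin 2) ℤ := P (k + n) - P k

theorem fkn_dvd_succ (k n : ℕ) : fkn k n ∣ fkn (k + 1) n := by
  refine ⟨P (k + n) ^ 2 + P (k + n) * P k + P k ^ 2 - 3 * aP ^ 2, ?_⟩
  have h : k + 1 + n = (k + n) + 1 := by omega
  simp only [fkn, h, P]
  ring

theorem fkn_dvd_of_le {l k : ℕ} (n : ℕ) (h : l ≤ k) : fkn l n ∣ fkn k n := by
  induction k, h using Nat.le_induction with
  | base => exact dvd_rfl
  | succ k _ ih => exact ih.trans (fkn_dvd_succ k n)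

theorem stmt0 (k l m n : ℕ) (hlk : l ≤ k) (hm : 1 ≤ m) (hn : 1 ≤ n) (hmn : m ∣ n) :
    fkn l m ∣ fkn k n := by
  obtain ⟨q, rfl⟩ := hmn
  clear hn
  induction q with
  | zero => simp [fkn]
  | succ q ih =>
    have h : fkn k (m * (q + 1)) = fkn (k + m * q) m + fkn k (m * q) := by
      simp only [fkn, mul_add, mul_one, add_assoc]
      ring
    rw [h]
    exact dvd_add (fkn_dvd_of_le m (by omega)) ih
end

section
/- (Weak Thurston rigidity for cubic polynomials.) For all integers k₁, k₂ ≥ 0 and n₁, n₂ ≥ 1, the polynomials P_{k₁+n₁} − P_{k₁} (which equals f^{k₁+n₁}(a) − f^{k₁}(a)) and Q_{k₂+n₂} − Q_{k₂} (which equals f^{k₂+n₂}(−a) − f^{k₂}(−a)) have no common non-unit factor in ℂ[a,b]; that is, their images in ℂ[a,b] are coprime. -/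
/-!
The curves `P_{k₁+n₁} = P_{k₁}` and `Q_{k₂+n₂} = Q_{k₂}` do not meet at infinity. For `k + n = m + 1`
the top-degree form of `P_{k+n} - P_k` has degree `3 ^ m` and contains the monomial `b ^ (3 ^ m)`
(put `a = 0`), while the top-degree form of `Q_{k+n} - Q_k` is a nonzero constant times
`a ^ (3 ^ (k+n))`.

Consequently, for the graded lexicographic order with `b > a`, the leading monomial of the first
polynomial is a power of `b` and that of the second is a power of `a`. Leading monomials are
multiplicative over a domain, so the leading monomial of a common factor divides both and is
trivial; a polynomial whose leading monomial for a graded order is trivial is constant.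

Mathlib's `degLex` on `Fin 2` makes the variable of index `0` the larger one, so the whole argument
is carried out after exchanging the two variables: in the lemmas, `X 0` stands for `b` and `X 1`
for `a`.
-/

open MvPolynomial

/-- `Q m = f^m(-a)` for `f(z) = z³ - 3a²z + 2a³ + b`. -/
noncomputable def Q : ℕ → MvPolynomial (Fin 2) ℤ
  | 0 => -aP
  | m + 1 => (Q m) ^ 3 - 3 * aP ^ 2 * (Q m) + 2 * aP ^ 3 + bP

section TotalDegree

variable {p q : MvPolynomial (Fin 2) ℂ} {m n k : ℕ}

private lemma td_add (hp : p.totalDegree ≤ n) (hq : q.totalDegree ≤ n) :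
    (p + q).totalDegree ≤ n :=
  (totalDegree_add p q).trans (max_le hp hq)

private lemma td_sub (hp : p.totalDegree ≤ n) (hq : q.totalDegree ≤ n) :
    (p - q).totalDegree ≤ n :=
  (totalDegree_sub p q).trans (max_le hp hq)

private lemma td_mul (hp : p.totalDegree ≤ m) (hq : q.totalDegree ≤ n) (h : m + n ≤ k) :
    (p * q).totalDegree ≤ k :=
  (totalDegree_mul p q).trans (by omega)

private lemma td_pow (hp : p.totalDegree ≤ m) (h : n * m ≤ k) :
    (p ^ n).totalDegree ≤ k :=
  (totalDegree_pow p n).trans ((Nat.mul_le_mul_left n hp).trans h)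

private lemma td_X_pow (i : Fin 2) (h : n ≤ k) :
    ((X i : MvPolynomial (Fin 2) ℂ) ^ n).totalDegree ≤ k := by
  simpa using h

private lemma td_C_mul (c : ℂ) (hp : p.totalDegree ≤ k) : (C c * p).totalDegree ≤ k :=
  td_mul (m := 0) (by simp) hp (by omega)

end TotalDegree

/-- Shape of the orbit of `a`: from the first iterate on, it is `b ^ (3 ^ m)` plus a multiple of
`a` plus terms of lower degree, with total degree at most `3 ^ m`. -/
private lemma orbit_pos {F : ℕ → MvPolynomial (Fin 2) ℂ}
    (hF : ∀ m, F (m + 1) = F m ^ 3 - C 3 * (X 1 ^ 2 * F m) + C 2 * X 1 ^ 3 + X 0)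
    (h0 : F 0 = X 1) (m : ℕ) :
    (F (m + 1)).totalDegree ≤ 3 ^ m ∧ ∃ S R : MvPolynomial (Fin 2) ℂ,
      F (m + 1) = X 0 ^ 3 ^ m + X 1 * S + R ∧ R.totalDegree ≤ 3 ^ m - 1 := by
  induction m with
  | zero =>
    have h1 : F 1 = X 0 := by
      rw [hF 0, h0, show (C 3 : MvPolynomial (Fin 2) ℂ) = 3 from map_ofNat C 3,
        show (C 2 : MvPolynomial (Fin 2) ℂ) = 2 from map_ofNat C 2]
      ring
    refine ⟨by simp [h1], 0, 0, by simp [h1], by simp⟩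
  | succ m ih =>
    obtain ⟨hd, S, R, hS, hR⟩ := ih
    have hN : 1 ≤ 3 ^ m := Nat.one_le_pow _ _ (by norm_num)
    rw [pow_succ 3 m]
    generalize 3 ^ m = N at *
    constructor
    · rw [hF (m + 1)]
      refine td_add (td_add (td_sub (td_pow hd (by omega)) (td_C_mul _ ?_)) (td_C_mul _ ?_)) ?_
      · exact td_mul (td_X_pow 1 le_rfl) hd (by omega)
      · exact td_X_pow 1 (by omega)
      · rw [totalDegree_X]; omega
    · refine ⟨S * (3 * X 0 ^ (2 * N) + 3 * X 0 ^ N * (X 1 * S) + (X 1 * S) ^ 2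
          + 6 * X 0 ^ N * R + 3 * (X 1 * S) * R + 3 * R ^ 2)
          - C 3 * (X 1 * F (m + 1)) + C 2 * X 1 ^ 2,
        R * (C 3 * X 0 ^ (2 * N) + C 3 * (X 0 ^ N * R) + R ^ 2) + X 0, ?_, ?_⟩
      · rw [hF (m + 1), show (C 3 : MvPolynomial (Fin 2) ℂ) = 3 from map_ofNat C 3, hS]
        ring
      · refine td_add (td_mul (n := 2 * N) hR (td_add (td_add (td_C_mul _ ?_) (td_C_mul _ ?_)) ?_)
          (by omega)) ?_
        · exact td_X_pow 0 le_rfl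
        · exact td_mul (td_X_pow 0 le_rfl) hR (by omega)
        · exact td_pow hR (by omega)
        · rw [totalDegree_X]; omega

/-- Shape of the orbit of `-a`: a nonzero constant times `a ^ (3 ^ m)` plus terms of lower
degree. -/
private lemma orbit_neg {F : ℕ → MvPolynomial (Fin 2) ℂ}
    (hF : ∀ m, F (m + 1) = F m ^ 3 - C 3 * (X 1 ^ 2 * F m) + C 2 * X 1 ^ 3 + X 0)
    (h0 : F 0 = -X 1) (m : ℕ) :
    ∃ c : ℂ, c ≠ 0 ∧ ∃ R : MvPolynomial (Fin 2) ℂ,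
      F m = C c * X 1 ^ 3 ^ m + R ∧ R.totalDegree ≤ 3 ^ m - 1 := by
  -- For `m = 0` the terms `-3a²F + 2a³` still contribute to the top degree, so the induction
  -- starts at `m = 1`, where `F 1 = 4a³ + b`.
  rcases m with _ | m
  · exact ⟨-1, by norm_num, 0, by simp [h0], by simp⟩
  induction m with
  | zero =>
    refine ⟨4, by norm_num, X 0, ?_, by simp⟩
    rw [hF 0, h0, show (C 3 : MvPolynomial (Fin 2) ℂ) = 3 from map_ofNat C 3,
      show (C 2 : MvPolynomial (Fin 2) ℂ) = 2 from map_ofNat C 2,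
      show (C 4 : MvPolynomial (Fin 2) ℂ) = 4 from map_ofNat C 4]
    ring
  | succ m ih =>
    obtain ⟨c, hc, R, hS, hR⟩ := ih
    have hN : 3 ≤ 3 ^ (m + 1) := by
      rw [pow_succ]
      have : 1 ≤ 3 ^ m := Nat.one_le_pow _ _ (by norm_num)
      omega
    rw [pow_succ 3 (m + 1)]
    generalize 3 ^ (m + 1) = N at *
    have hd : (F (m + 1)).totalDegree ≤ N := by
      rw [hS]
      exact td_add (td_C_mul _ (td_X_pow 1 le_rfl)) (hR.trans (by omega))
    refine ⟨c ^ 3, pow_ne_zero _ hc,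
      R * (C (3 * c ^ 2) * X 1 ^ (2 * N) + C (3 * c) * (X 1 ^ N * R) + R ^ 2)
        - C 3 * (X 1 ^ 2 * F (m + 1)) + C 2 * X 1 ^ 3 + X 0, ?_, ?_⟩
    · rw [hF (m + 1)]
      nth_rewrite 1 [hS]
      simp only [map_mul, map_pow, show (C 3 : MvPolynomial (Fin 2) ℂ) = 3 from map_ofNat C 3]
      ring
    · refine td_add (td_add (td_sub (td_mul (n := 2 * N) hR
        (td_add (td_add (td_C_mul _ ?_) (td_C_mul _ ?_)) ?_) (by omega)) (td_C_mul _ ?_))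
        (td_C_mul _ ?_)) ?_
      · exact td_X_pow 1 le_rfl
      · exact td_mul (td_X_pow 1 le_rfl) hR (by omega)
      · exact td_pow hR (by omega)
      · exact td_mul (td_X_pow 1 le_rfl) hd (by omega)
      · exact td_X_pow 1 (by omega)
      · rw [totalDegree_X]; omega

/-- A polynomial of total degree at most `N` in which `b ^ N` occurs has a pure power of `b` as
its leading monomial. -/
private lemma degLex_one_eq_zero {p : MvPolynomial (Fin 2) ℂ} {N : ℕ} (hd : p.totalDegree ≤ N)
    (hc : coeff (Finsupp.single 0 N) p ≠ 0) : (MonomialOrder.degLex.degree p) 1 = 0 := by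
  have hle := MonomialOrder.degLex.le_degree (mem_support_iff.2 hc)
  have hs : (MonomialOrder.degLex.degree p).degree ≤ N := by
    rwa [degree_degLexDegree]
  generalize MonomialOrder.degLex.degree p = s at *
  rw [MonomialOrder.degLex_le_iff, Finsupp.DegLex.le_iff] at hle
  simp only [ofDegLex_toDegLex, Finsupp.degree_single] at hle
  rcases hle with h | ⟨h, h'⟩
  · omega
  · have hsum : s.degree = s 0 + s 1 := by
      rw [Finsupp.degree_eq_sum, Fin.sum_univ_two]
    rcases h'.eq_or_lt with h' | ⟨i, hi, hi'⟩
    · have : Finsupp.single 0 N = s := toLex.injective h'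
      simp [← this]
    · fin_cases i
      · simp at hi'
        omega
      · have := hi 0 (by simp)
        simp at this
        omega

/-- A polynomial `c a ^ N + (terms of lower degree)` with `c ≠ 0` has leading monomial `a ^ N`;
in particular `b` does not occur in its leading monomial. -/
private lemma degLex_zero_eq_zero {R : MvPolynomial (Fin 2) ℂ} {c : ℂ} {N : ℕ} (hc : c ≠ 0)
    (hd : R.totalDegree < N) : (MonomialOrder.degLex.degree (C c * X 1 ^ N + R)) 0 = 0 := by
  have h1 : MonomialOrder.degLex.degree (C c * X 1 ^ N : MvPolynomial (Fin 2) ℂ)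
      = Finsupp.single 1 N := by
    classical
    rw [C_mul_X_pow_eq_monomial, MonomialOrder.degree_monomial, if_neg hc]
  rw [MonomialOrder.degree_add_of_lt, h1]
  · simp
  · rw [h1, MonomialOrder.degLex_lt_iff, Finsupp.DegLex.lt_iff]
    left
    simpa [degree_degLexDegree] using hd

/-- Coprimality after exchanging the two variables. -/
private lemma isRelPrime_swapped {F G : ℕ → MvPolynomial (Fin 2) ℂ}
    (hF : ∀ m, F (m + 1) = F m ^ 3 - C 3 * (X 1 ^ 2 * F m) + C 2 * X 1 ^ 3 + X 0)
    (hG : ∀ m, G (m + 1) = G m ^ 3 - C 3 * (X 1 ^ 2 * G m) + C 2 * X 1 ^ 3 + X 0)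
    (hF0 : F 0 = X 1) (hG0 : G 0 = -X 1) (k₁ k₂ n₁ n₂ : ℕ) (hn₁ : 1 ≤ n₁) (hn₂ : 1 ≤ n₂) :
    IsRelPrime (F (k₁ + n₁) - F k₁) (G (k₂ + n₂) - G k₂) := by
  obtain ⟨m, hm⟩ : ∃ m, k₁ + n₁ = m + 1 := ⟨k₁ + n₁ - 1, by omega⟩
  have hpos (j : ℕ) : 1 ≤ 3 ^ j := Nat.one_le_pow _ _ (by norm_num)
  -- the earlier iterate `F k₁` affects neither the degree bound nor the coefficient of `b ^ (3 ^ m)`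
  have hk : (F k₁).totalDegree ≤ 3 ^ m ∧ coeff (Finsupp.single 0 (3 ^ m)) (F k₁) = 0 := by
    rcases k₁ with _ | k
    · rw [hF0]
      refine ⟨by simpa using hpos m, ?_⟩
      rw [coeff_X, if_neg]
      intro h
      have := DFunLike.congr_fun h 1
      simp at this
    · have h1 := (orbit_pos hF hF0 k).1
      have h2 : 3 ^ k < 3 ^ m := Nat.pow_lt_pow_right (by norm_num) (by omega)
      refine ⟨by omega, coeff_eq_zero_of_totalDegree_lt ?_⟩
      rw [← Finsupp.degree_apply, Finsupp.degree_single]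
      omega
  obtain ⟨hd, S, R, hS, hR⟩ := orbit_pos hF hF0 m
  have hcoeff : coeff (Finsupp.single 0 (3 ^ m)) (F (k₁ + n₁) - F k₁) = 1 := by
    rw [hm, coeff_sub, hk.2, hS, coeff_add, coeff_add, coeff_X_pow, coeff_X_mul',
      coeff_eq_zero_of_totalDegree_lt (f := R)]
    · simp
    · rw [← Finsupp.degree_apply, Finsupp.degree_single]
      have := hpos m
      omega
  have hP1 := degLex_one_eq_zero (p := F (k₁ + n₁) - F k₁) (td_sub (hm ▸ hd) hk.1)
    (by rw [hcoeff]; exact one_ne_zero)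
  have hP0 : F (k₁ + n₁) - F k₁ ≠ 0 := by
    intro h
    simp [h] at hcoeff
  obtain ⟨c, hc, T, hT, hTd⟩ := orbit_neg hG hG0 (k₂ + n₂)
  obtain ⟨c', -, T', hT', hTd'⟩ := orbit_neg hG hG0 k₂
  have hGk : (G k₂).totalDegree ≤ 3 ^ (k₂ + n₂) - 1 := by
    have h2 : 3 ^ k₂ < 3 ^ (k₂ + n₂) := Nat.pow_lt_pow_right (by norm_num) (by omega)
    rw [hT']
    exact td_add (td_C_mul _ (td_X_pow 1 (by omega))) (by omega)
  have hQ := degLex_zero_eq_zero (R := T - G k₂) (N := 3 ^ (k₂ + n₂)) hc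
    ((td_sub hTd hGk).trans_lt (by have := hpos (k₂ + n₂); omega))
  rw [← add_sub_assoc, ← hT] at hQ
  have hQ0 : G (k₂ + n₂) - G k₂ ≠ 0 := by
    intro h
    have h1 : C c * X 1 ^ 3 ^ (k₂ + n₂) = G k₂ - T := by
      linear_combination h - hT
    have h2 := congrArg (coeff (Finsupp.single 1 (3 ^ (k₂ + n₂)))) h1
    rw [coeff_eq_zero_of_totalDegree_lt (f := G k₂ - T), C_mul_X_pow_eq_monomial,
      coeff_monomial, if_pos rfl] at h2
    · exact hc h2
    · rw [← Finsupp.degree_apply, Finsupp.degree_single]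
      exact (td_sub hGk hTd).trans_lt (by have := hpos (k₂ + n₂); omega)
  rintro g ⟨u, hu⟩ ⟨v, hv⟩
  rw [hu] at hP0 hP1
  rw [hv] at hQ0 hQ
  have hg : g ≠ 0 := left_ne_zero_of_mul hP0
  rw [MonomialOrder.degree_mul hg (right_ne_zero_of_mul hP0), Finsupp.add_apply] at hP1
  rw [MonomialOrder.degree_mul hg (right_ne_zero_of_mul hQ0), Finsupp.add_apply] at hQ
  have hdeg : MonomialOrder.degLex.degree g = 0 := by
    ext i
    fin_cases i
    · simpa using (Nat.add_eq_zero_iff.1 hQ).1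
    · simpa using (Nat.add_eq_zero_iff.1 hP1).1
  rw [MonomialOrder.degree_eq_zero_iff] at hdeg
  rw [hdeg]
  exact (isUnit_iff_ne_zero.2 (MonomialOrder.leadingCoeff_ne_zero_iff.2 hg)).map C

/-- Weak Thurston rigidity: the polynomials `f^{k₁+n₁}(a) - f^{k₁}(a)` and
`f^{k₂+n₂}(-a) - f^{k₂}(-a)` have no common non-unit factor in `ℂ[a,b]`. -/
theorem stmt2 (k₁ k₂ n₁ n₂ : ℕ) (hn₁ : 1 ≤ n₁) (hn₂ : 1 ≤ n₂) :
    IsRelPrime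
      (MvPolynomial.map (Int.castRingHom ℂ) (P (k₁ + n₁) - P k₁))
      (MvPolynomial.map (Int.castRingHom ℂ) (Q (k₂ + n₂) - Q k₂)) := by
  let e := renameEquiv ℂ (Equiv.swap (0 : Fin 2) 1)
  have h3 : (C 3 : MvPolynomial (Fin 2) ℂ) = 3 := map_ofNat C 3
  have h2 : (C 2 : MvPolynomial (Fin 2) ℂ) = 2 := map_ofNat C 2
  have r3 : rename (Equiv.swap (0 : Fin 2) 1) (3 : MvPolynomial (Fin 2) ℂ) = 3 := map_ofNat _ 3
  have r2 : rename (Equiv.swap (0 : Fin 2) 1) (2 : MvPolynomial (Fin 2) ℂ) = 2 := map_ofNat _ 2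
  have key := isRelPrime_swapped
    (F := fun m => e (MvPolynomial.map (Int.castRingHom ℂ) (P m)))
    (G := fun m => e (MvPolynomial.map (Int.castRingHom ℂ) (Q m)))
    (by intro m; simp [P, aP, bP, e, h2, h3, r2, r3, mul_assoc])
    (by intro m; simp [Q, aP, bP, e, h2, h3, r2, r3, mul_assoc])
    (by simp [P, aP, e]) (by simp [Q, aP, e]) k₁ k₂ n₁ n₂ hn₁ hn₂
  simp only [← map_sub] at key
  intro d hd₁ hd₂
  exact (MulEquiv.isUnit_map e).1 (key (map_dvd e hd₁) (map_dvd e hd₂))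
end

section
/- Let g ∈ ℚ[a,b] satisfy g(0,0) = 0 and have nonzero homogeneous part of degree 1 (nonzero linear part). Then g is irreducible in ℚ[a,b] if and only if g is irreducible in ℂ[a,b]. -/
open MvPolynomial

/-!
The nontrivial direction is descent of irreducibility along a field extension `K / k`. Suppose
`g = P * Q` over `K` with `g` irreducible over `k`. As `g` has a nonzero linear part, `P` and `Q`
cannot both vanish at the origin; say `Q(0) ≠ 0`. Then `Q` is invertible modulo every power of the
maximal ideal `m` at the origin, so `P` is a multiple of `g` modulo every `m ^ n`. Applying a
`k`-linear functional `K → k` to the coefficients preserves this property because `g` has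
coefficients in `k`, and turns `P` into a polynomial `F` over `k`, nonzero for a suitable
functional, of degree at most `deg P`. By Krull's intersection theorem some `(1 - r) * F` with
`r ∈ m` is a multiple of `g`; since `g` is prime and does not divide `1 - r`, it divides `F`
(`dvd_of_forall_sub_mem_pow`). Hence `deg g ≤ deg F ≤ deg P`, so `Q` is constant. No Galois theory
of `K / k` is involved.
-/

section Descent

variable {σ k K : Type*} [Field k] [Field K] [Algebra k K]

/-- The polynomial over `k` obtained by applying a `k`-linear functional on `K` to each
coefficient. -/
noncomputable def mapCoeff (l : K →ₗ[k] k) (p : MvPolynomial σ K) : MvPolynomial σ k :=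
  ∑ m ∈ p.support, monomial m (l (coeff m p))

lemma coeff_mapCoeff (l : K →ₗ[k] k) (p : MvPolynomial σ K) (m : σ →₀ ℕ) :
    coeff m (mapCoeff l p) = l (coeff m p) := by
  classical
  simp only [mapCoeff, coeff_sum, coeff_monomial, Finset.sum_ite_eq', mem_support_iff]
  split_ifs with h
  · rfl
  · simp [not_not.mp h]

lemma mapCoeff_sub (l : K →ₗ[k] k) (p q : MvPolynomial σ K) :
    mapCoeff l (p - q) = mapCoeff l p - mapCoeff l q := by
  ext m
  simp [coeff_mapCoeff]

lemma mapCoeff_map_mul (l : K →ₗ[k] k) (g : MvPolynomial σ k) (u : MvPolynomial σ K) :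
    mapCoeff l (map (algebraMap k K) g * u) = g * mapCoeff l u := by
  classical
  ext m
  simp [coeff_mapCoeff, coeff_mul, coeff_map, ← Algebra.smul_def]

lemma totalDegree_mapCoeff_le (l : K →ₗ[k] k) (p : MvPolynomial σ K) :
    (mapCoeff l p).totalDegree ≤ p.totalDegree := by
  refine Finset.sup_mono fun m hm => ?_
  rw [mem_support_iff, coeff_mapCoeff] at hm
  rw [mem_support_iff]
  intro h
  simp [h] at hm

lemma totalDegree_map_algebraMap (p : MvPolynomial σ k) :
    (map (algebraMap k K) p).totalDegree = p.totalDegree := by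
  simp only [totalDegree, support_map_of_injective p (algebraMap k K).injective]

lemma mem_idealOfVars_iff {p : MvPolynomial σ K} :
    p ∈ idealOfVars σ K ↔ constantCoeff p = 0 := by
  rw [← pow_one (idealOfVars σ K), mem_pow_idealOfVars_iff']
  simp [constantCoeff_eq, Finsupp.degree_eq_zero_iff]

/-- A polynomial with nonzero constant term is invertible modulo each power of the ideal of the
origin: a truncated geometric series is an inverse. -/
lemma exists_mul_sub_one_mem_pow {Q : MvPolynomial σ K} (hQ : constantCoeff Q ≠ 0) (n : ℕ) :
    ∃ U, 1 - Q * U ∈ idealOfVars σ K ^ n := by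
  set t : MvPolynomial σ K := 1 - Q * C (constantCoeff Q)⁻¹ with ht
  have htm : t ∈ idealOfVars σ K := by
    rw [mem_idealOfVars_iff]
    simp [ht, hQ]
  obtain ⟨V, hV⟩ := one_sub_dvd_one_sub_pow t n
  refine ⟨C (constantCoeff Q)⁻¹ * V, ?_⟩
  have : 1 - Q * (C (constantCoeff Q)⁻¹ * V) = t ^ n := by
    have h1 : 1 - t = Q * C (constantCoeff Q)⁻¹ := by rw [ht]; ring
    rw [h1] at hV
    linear_combination hV
  rw [this]
  exact Ideal.pow_mem_pow htm n

/-- A prime polynomial through the origin divides every polynomial that it divides modulo all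
powers of the ideal of the origin. -/
lemma dvd_of_forall_sub_mem_pow [Finite σ] {g F : MvPolynomial σ k} (hg : Prime g)
    (h0 : constantCoeff g = 0) (h : ∀ n, ∃ U, F - g * U ∈ idealOfVars σ k ^ n) : g ∣ F := by
  have hF : (Ideal.Quotient.mk (Ideal.span {g}) F) ∈
      (⨅ i : ℕ, idealOfVars σ k ^ i • ⊤ :
        Submodule (MvPolynomial σ k) (MvPolynomial σ k ⧸ Ideal.span {g})) := by
    rw [Submodule.mem_iInf]
    intro n
    obtain ⟨U, hU⟩ := h n
    have h1 : Ideal.Quotient.mk (Ideal.span {g}) F =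
        (F - g * U) • Ideal.Quotient.mk (Ideal.span {g}) 1 := by
      change _ = Ideal.Quotient.mk (Ideal.span {g}) ((F - g * U) * 1)
      rw [Ideal.Quotient.eq, Ideal.mem_span_singleton]
      exact ⟨U, by ring⟩
    rw [h1]
    exact Submodule.smul_mem_smul hU trivial
  rw [Ideal.mem_iInf_smul_pow_eq_bot_iff] at hF
  obtain ⟨⟨r, hr⟩, hrF⟩ := hF
  change Ideal.Quotient.mk (Ideal.span {g}) (r * F) = _ at hrF
  rw [eq_comm, Ideal.Quotient.eq, Ideal.mem_span_singleton] at hrF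
  have h2 : g ∣ (1 - r) * F := by convert hrF using 1; ring
  refine (hg.dvd_or_dvd h2).resolve_left ?_
  rintro ⟨w, hw⟩
  have := congrArg constantCoeff hw
  simp [mem_idealOfVars_iff.mp hr, h0] at this

/-- In a factorization over `K` of an irreducible polynomial over `k` through the origin, a factor
that does not vanish at the origin is constant. -/
lemma isUnit_of_constantCoeff_ne_zero [Finite σ] {g : MvPolynomial σ k} (hg : Irreducible g)
    (h0 : constantCoeff g = 0) {P Q : MvPolynomial σ K}
    (hPQ : map (algebraMap k K) g = P * Q) (hQ : constantCoeff Q ≠ 0) : IsUnit Q := by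
  have hinj := (algebraMap k K).injective
  have hne : P * Q ≠ 0 := by
    rw [← hPQ]
    exact fun h => hg.ne_zero (map_injective _ hinj (h.trans (map_zero _).symm))
  obtain ⟨hP0, hQ0⟩ := mul_ne_zero_iff.mp hne
  obtain ⟨m, hm⟩ := ne_zero_iff.mp hP0
  obtain ⟨l, hl⟩ : ∃ l : Module.Dual k K, l (coeff m P) ≠ 0 := by
    by_contra! hcon
    exact hm ((Module.forall_dual_apply_eq_zero_iff k _).mp hcon)
  have hF0 : mapCoeff l P ≠ 0 := ne_zero_iff.mpr ⟨m, by rwa [coeff_mapCoeff]⟩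
  have hdvd : g ∣ mapCoeff l P := by
    refine dvd_of_forall_sub_mem_pow hg.prime h0 fun n => ?_
    obtain ⟨U, hU⟩ := exists_mul_sub_one_mem_pow hQ n
    refine ⟨mapCoeff l U, ?_⟩
    rw [← mapCoeff_map_mul, ← mapCoeff_sub, hPQ]
    have hmem : P - P * Q * U ∈ idealOfVars σ K ^ n := by
      convert Ideal.mul_mem_left _ P hU using 1
      ring
    rw [mem_pow_idealOfVars_iff'] at hmem ⊢
    intro x hx
    rw [coeff_mapCoeff, hmem x hx, map_zero]
  have hdeg : g.totalDegree = P.totalDegree + Q.totalDegree := by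
    rw [← totalDegree_mul_of_isDomain hP0 hQ0, ← hPQ, totalDegree_map_algebraMap]
  obtain ⟨w, hw⟩ := hdvd
  have hw0 : w ≠ 0 := by rintro rfl; exact hF0 (by simpa using hw)
  have h1 := totalDegree_mul_of_isDomain hg.ne_zero hw0
  rw [← hw] at h1
  have h2 := totalDegree_mapCoeff_le l P
  have h3 : Q.totalDegree = 0 := by omega
  rw [isUnit_iff_totalDegree_of_isReduced]
  exact ⟨hQ.isUnit, h3⟩

lemma isUnit_of_isUnit_map {p : MvPolynomial σ k} (hp : IsUnit (map (algebraMap k K) p)) :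
    IsUnit p := by
  rw [isUnit_iff_totalDegree_of_isReduced] at hp ⊢
  rw [totalDegree_map_algebraMap, coeff_map] at hp
  exact ⟨(isUnit_map_iff _ _).mp hp.1, hp.2⟩

end Descent

/-- Extension of irreducibility from `ℚ` to `ℂ` for a polynomial `g ∈ ℚ[a,b]` with
`g(0,0) = 0` and nonzero linear part. -/
theorem stmt4 (g : MvPolynomial (Fin 2) ℚ)
    (h0 : constantCoeff g = 0)
    (hlin : homogeneousComponent 1 g ≠ 0) :
    Irreducible g ↔ Irreducible (MvPolynomial.map (algebraMap ℚ ℂ) g) := by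
  constructor
  · intro hg
    refine ⟨fun h => hg.not_isUnit (isUnit_of_isUnit_map h), fun P Q hPQ => ?_⟩
    by_cases hQ : constantCoeff Q = 0
    · by_cases hP : constantCoeff P = 0
      -- `P` and `Q` both vanish at the origin, so `P * Q` has no linear part.
      · refine absurd ?_ hlin
        have hmem : P * Q ∈ idealOfVars (Fin 2) ℂ ^ 2 := by
          rw [pow_two]
          exact Ideal.mul_mem_mul (mem_idealOfVars_iff.mpr hP) (mem_idealOfVars_iff.mpr hQ)
        rw [← hPQ, mem_pow_idealOfVars_iff'] at hmem
        ext d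
        rw [coeff_homogeneousComponent, coeff_zero]
        split_ifs with hd
        · have := hmem d (by omega)
          rwa [coeff_map, map_eq_zero] at this
        · rfl
      · exact .inl (isUnit_of_constantCoeff_ne_zero hg h0 (hPQ.trans (mul_comm P Q)) hP)
    · exact .inr (isUnit_of_constantCoeff_ne_zero hg h0 hPQ hQ)
  · intro hg
    refine ⟨fun h => hg.not_isUnit (h.map _), fun p q hpq => ?_⟩
    have h := hg.isUnit_or_isUnit (a := map (algebraMap ℚ ℂ) p) (b := map (algebraMap ℚ ℂ) q)
      (by rw [hpq, map_mul])
    exact h.imp isUnit_of_isUnit_map isUnit_of_isUnit_map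
end

section
/- Let F ⊆ ℂ be a number field (a finite extension of ℚ) and let g ∈ F[a,b]. Suppose g has a smooth F-rational point, i.e., there exists (a₀,b₀) ∈ F² with g(a₀,b₀) = 0 and at least one of the partial derivatives ∂g/∂a, ∂g/∂b nonzero at (a₀,b₀). Then g is irreducible in F[a,b] if and only if g is irreducible in ℂ[a,b]. -/
open MvPolynomial

/-!
If `g = p q` over `F`, then over `ℂ` one factor is a nonzero constant, hence it already was one
over `F`; this gives the easy direction.

For the converse, let `P` be the smooth `F`-rational point and let `h` be an irreducible factor
of `g` over `ℂ` with `h(P) = 0`, scaled so that one of its coefficients is `1`; write `g = h k`.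
If `k(P)` were `0`, every partial derivative of `g` would vanish at `P`; so `k(P) ≠ 0`, that is,
`h` is the only component of `g` through `P`. For `σ ∈ Aut(ℂ/F)` the conjugate `σ h` is again an
irreducible factor of `g` through `P`, so it is associated to `h`, and equal to `h` by the
normalisation; then `σ k = k` as well. As the fixed field of `Aut(ℂ/F)` is `F`
(`exists_algEquiv_apply_ne`), both `h` and `k` have coefficients in `F`. Irreducibility of `g`
over `F` makes `k` constant, so `g` is associated to the irreducible polynomial `h` over `ℂ`.

The statement on the fixed field holds for every algebraically closed extension in
characteristic `0`, algebraic or not: an automorphism of a polynomial ring on a transcendence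
basis extends to the whole field.
-/

/-- An automorphism of the polynomial ring on a transcendence basis extends to an automorphism of
the algebraically closed field above it. -/
lemma exists_ringEquiv_extending {R K ι : Type*} [CommRing R] [IsDomain R] [Field K] [Algebra R K]
    [IsAlgClosed K] {v : ι → K} (hv : IsTranscendenceBasis R v)
    (e : MvPolynomial ι R ≃+* MvPolynomial ι R) :
    ∃ τ : K ≃+* K, ∀ p, τ (aeval v p) = aeval v (e p) := by
  let _ := IsAlgClosed.isAlgClosure_of_transcendence_basis v hv
  let a : MvPolynomial ι R ≃+* Algebra.adjoin R (Set.range v) := hv.1.aevalEquiv.toRingEquiv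
  refine ⟨IsAlgClosure.equivOfEquiv K K ((a.symm.trans e).trans a), fun p => ?_⟩
  have h := IsAlgClosure.equivOfEquiv_algebraMap K K ((a.symm.trans e).trans a) (a p)
  rw [RingEquiv.trans_apply, RingEquiv.trans_apply, RingEquiv.symm_apply_apply] at h
  exact h

/-- In characteristic zero, `F` is the fixed field of the group of `F`-automorphisms of any
algebraically closed extension. -/
lemma exists_algEquiv_apply_ne {F K : Type*} [Field F] [CharZero F] [Field K] [Algebra F K]
    [IsAlgClosed K] {x : K} (hx : x ∉ Set.range (algebraMap F K)) :
    ∃ τ : K ≃ₐ[F] K, τ x ≠ x := by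
  by_cases halg : IsAlgebraic F x
  · -- Galois theory moves `x` inside the relative algebraic closure `Q` of `F`; the automorphism
    -- of `Q` is then extended coefficientwise to polynomials in a transcendence basis over `Q`.
    let Q := algebraicClosure F K
    let y : Q := ⟨x, mem_algebraicClosure_iff.2 halg⟩
    have hy : y ∉ (⊥ : IntermediateField F Q) := by
      rw [IntermediateField.mem_bot]
      rintro ⟨z, hz⟩
      exact hx ⟨z, congrArg Subtype.val hz⟩
    rw [InfiniteGalois.mem_bot_iff_fixed] at hy
    push Not at hy
    obtain ⟨s, hs⟩ := hy
    obtain ⟨ι, v, hv⟩ := exists_isTranscendenceBasis' Q K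
    obtain ⟨τ, hτ⟩ := exists_ringEquiv_extending hv (mapEquiv ι s.toRingEquiv)
    have hC (q : Q) : τ (q : K) = (s q : Q) := by
      simpa using hτ (C q)
    refine ⟨AlgEquiv.ofRingEquiv (f := τ) fun r => ?_, fun h => ?_⟩
    · have := hC (algebraMap F Q r)
      rwa [AlgEquiv.commutes] at this
    · exact hs (Subtype.ext ((hC y).symm.trans h))
  · -- A transcendental `x` belongs to a transcendence basis, and the sign change of all the
    -- variables sends it to `-x`.
    have hind : AlgebraicIndepOn F id ({x} : Set K) :=
      algebraicIndependent_unique_type_iff.2 halg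
    obtain ⟨t, hxt, ht⟩ := exists_isTranscendenceBasis_superset hind
    let n : MvPolynomial t F →ₐ[F] MvPolynomial t F := aeval fun i => -X i
    have hn : n.comp n = AlgHom.id F _ := by
      ext i : 1
      simp [n]
    obtain ⟨τ, hτ⟩ := exists_ringEquiv_extending ht (AlgEquiv.ofAlgHom n n hn hn).toRingEquiv
    refine ⟨AlgEquiv.ofRingEquiv (f := τ) fun r => ?_, fun h => ?_⟩
    · simpa using hτ (C r)
    · have h2 : τ x = -x := by
        simpa [n] using hτ (X ⟨x, hxt rfl⟩)
      have h3 : τ x = x := h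
      have : CharZero K := charZero_of_injective_algebraMap (algebraMap F K).injective
      rw [h3, self_eq_neg] at h2
      exact hx ⟨0, by rw [h2, map_zero]⟩

/-- Galois descent for polynomials. -/
lemma exists_map_eq_of_forall_algEquiv {F K ι : Type*} [Field F] [CharZero F] [Field K]
    [Algebra F K] [IsAlgClosed K] {p : MvPolynomial ι K}
    (hp : ∀ τ : K ≃ₐ[F] K, map (τ : K →+* K) p = p) :
    ∃ p₀ : MvPolynomial ι F, map (algebraMap F K) p₀ = p := by
  refine mem_range_map_iff_coeffs_subset.2 fun c hc => ?_
  obtain ⟨m, -, rfl⟩ := mem_coeffs_iff.1 hc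
  by_contra hcon
  obtain ⟨τ, hτ⟩ := exists_algEquiv_apply_ne hcon
  apply hτ
  conv_rhs => rw [← hp τ]
  rw [coeff_map]
  rfl

lemma isUnit_of_isUnit_map_s5 {F K ι : Type*} [Field F] [Field K] (f : F →+* K)
    {p : MvPolynomial ι F} (hp : IsUnit (map f p)) : IsUnit p := by
  obtain ⟨r, hr, h⟩ := isUnit_iff_eq_C_of_isReduced.1 hp
  have hp0 : p = C (coeff 0 p) := by
    ext m
    classical
    have hm := congrArg (coeff m) h
    rw [coeff_map, coeff_C] at hm
    rw [coeff_C]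
    split_ifs at hm ⊢ with h0
    · rw [h0]
    · simpa using hm
  refine isUnit_iff_eq_C_of_isReduced.2 ⟨coeff 0 p, isUnit_iff_ne_zero.2 fun h0 => ?_, hp0⟩
  rw [h0, C_0] at hp0
  rw [hp0, map_zero] at hp
  exact not_isUnit_zero hp

lemma irreducible_of_irreducible_map {F K ι : Type*} [Field F] [Field K] (f : F →+* K)
    {g : MvPolynomial ι F} (hg : Irreducible (map f g)) : Irreducible g := by
  refine ⟨fun h => hg.not_isUnit (h.map (map f)), fun a b hab => ?_⟩
  rw [hab, map_mul] at hg
  exact (hg.isUnit_or_isUnit rfl).imp (isUnit_of_isUnit_map_s5 f) (isUnit_of_isUnit_map_s5 f)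

/-- A nonzero polynomial vanishing at `P` has an irreducible factor vanishing at `P`, and this
factor can be chosen with some coefficient equal to `1`. -/
lemma exists_normalized_factor {K ι : Type*} [Field K] {G : MvPolynomial ι K} (hG : G ≠ 0)
    {P : ι → K} (hP : eval P G = 0) :
    ∃ h, Irreducible h ∧ h ∣ G ∧ eval P h = 0 ∧ ∃ m, coeff m h = 1 := by
  obtain ⟨u, hu⟩ := UniqueFactorizationMonoid.factors_prod hG
  have h0 : eval P (UniqueFactorizationMonoid.factors G).prod = 0 := by
    rw [← hu, map_mul] at hP
    exact (mul_eq_zero.1 hP).resolve_right (u.isUnit.map (eval P)).ne_zero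
  rw [map_multiset_prod, Multiset.prod_eq_zero_iff, Multiset.mem_map] at h0
  obtain ⟨h, hmem, hPh⟩ := h0
  have hirr := UniqueFactorizationMonoid.irreducible_of_factor h hmem
  obtain ⟨m, hm⟩ := ne_zero_iff.1 hirr.ne_zero
  have hunit : IsUnit (C (coeff m h)⁻¹ : MvPolynomial ι K) :=
    (isUnit_iff_ne_zero.2 (inv_ne_zero hm)).map C
  have hass : Associated h (C (coeff m h)⁻¹ * h) := (associated_unit_mul_left h _ hunit).symm
  refine ⟨C (coeff m h)⁻¹ * h, hass.irreducible hirr, ?_, ?_, m, ?_⟩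
  · exact hass.symm.dvd.trans (UniqueFactorizationMonoid.dvd_of_mem_factors hmem)
  · rw [map_mul, hPh, mul_zero]
  · rw [coeff_C_mul, inv_mul_cancel₀ hm]

/-- Irreducible polynomials dividing each other and sharing the coefficient `1` at the same
monomial are equal. -/
lemma eq_of_dvd_of_coeff_eq_one {K ι : Type*} [Field K] {p q : MvPolynomial ι K}
    (hp : Irreducible p) (hq : Irreducible q) (hpq : p ∣ q) {m : ι →₀ ℕ}
    (hpm : coeff m p = 1) (hqm : coeff m q = 1) : p = q := by
  obtain ⟨u, hu⟩ := hp.associated_of_dvd hq hpq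
  obtain ⟨r, -, hr⟩ := isUnit_iff_eq_C_of_isReduced.1 u.isUnit
  rw [hr, mul_comm] at hu
  have h1 : r = 1 := by
    have := congrArg (coeff m) hu
    rwa [coeff_C_mul, hpm, hqm, mul_one] at this
  rw [← hu, h1, C_1, one_mul]

/-- An irreducible polynomial over `F` with a smooth `F`-rational point stays irreducible over an
algebraically closed extension. -/
lemma irreducible_map_of_smooth_point {F K ι : Type*} [Field F] [CharZero F] [Field K]
    [Algebra F K] [IsAlgClosed K] {g : MvPolynomial ι F} {P : ι → F} (hzero : eval P g = 0)
    {i : ι} (hi : eval P (pderiv i g) ≠ 0) (hg : Irreducible g) :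
    Irreducible (map (algebraMap F K) g) := by
  set f := algebraMap F K with hf
  have hinj : Function.Injective (map f : MvPolynomial ι F → MvPolynomial ι K) :=
    map_injective f f.injective
  have hev (p : MvPolynomial ι F) : eval (f ∘ P) (map f p) = f (eval P p) :=
    (map_eval f P p).symm
  have hG : map f g ≠ 0 := fun h => hg.ne_zero (hinj (h.trans (map_zero _).symm))
  obtain ⟨h, hirr, ⟨k, hk⟩, hPh, m, hm⟩ :=
    exists_normalized_factor hG (P := f ∘ P) (by rw [hev, hzero, map_zero])
  have hPk : eval (f ∘ P) k ≠ 0 := by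
    intro hPk
    apply hi
    apply f.injective
    rw [← hev, ← pderiv_map, hk, pderiv_mul, map_add, map_mul, map_mul, hPh, hPk]
    simp
  have hfix (τ : K ≃ₐ[F] K) : map (τ : K →+* K) (map f g) = map f g := by
    rw [map_map]
    congr 2
    ext r
    exact τ.commutes r
  have hτh (τ : K ≃ₐ[F] K) : map (τ : K →+* K) h = h := by
    have hτirr : Irreducible (map (τ : K →+* K) h) :=
      (MulEquiv.irreducible_iff (mapEquiv ι τ.toRingEquiv)).2 hirr
    have hdvd : map (τ : K →+* K) h ∣ h * k := by
      rw [← hk, ← hfix τ, hk, map_mul]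
      exact dvd_mul_right _ _
    have hPτ : eval (f ∘ P) (map (τ : K →+* K) h) = 0 := by
      have hτP : f ∘ P = (τ : K →+* K) ∘ (f ∘ P) := by
        ext j
        exact (τ.commutes (P j)).symm
      rw [hτP, ← map_eval, hPh, map_zero]
    refine eq_of_dvd_of_coeff_eq_one hτirr hirr ?_ (m := m) ?_ hm
    · refine (hτirr.prime.dvd_or_dvd hdvd).resolve_right fun hdk => hPk ?_
      obtain ⟨l, rfl⟩ := hdk
      rw [map_mul, hPτ, zero_mul]
    · rw [coeff_map, hm, map_one]
  have hτk (τ : K ≃ₐ[F] K) : map (τ : K →+* K) k = k := by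
    have := hfix τ
    rw [hk, map_mul, hτh] at this
    exact mul_left_cancel₀ hirr.ne_zero this
  obtain ⟨h₀, rfl⟩ := exists_map_eq_of_forall_algEquiv hτh
  obtain ⟨k₀, rfl⟩ := exists_map_eq_of_forall_algEquiv hτk
  rw [← hf, ← map_mul] at hk
  have hk₀ : IsUnit k₀ := by
    refine (hg.isUnit_or_isUnit (hinj hk)).resolve_left fun hu => ?_
    exact hirr.not_isUnit (hu.map (map f))
  rw [hk, map_mul]
  exact (associated_mul_unit_right _ _ (hk₀.map (map f))).irreducible hirr

/-- Extension of irreducibility from a number field `F ⊆ ℂ` to `ℂ`, for a polynomial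
`g ∈ F[a,b]` having a smooth `F`-rational point. -/
theorem stmt5 (F : IntermediateField ℚ ℂ) (hF : FiniteDimensional ℚ F)
    (g : MvPolynomial (Fin 2) F)
    (a₀ b₀ : F)
    (hzero : eval (fun j => if j = 0 then a₀ else b₀) g = 0)
    (hsmooth : eval (fun j => if j = 0 then a₀ else b₀) (pderiv 0 g) ≠ 0 ∨
               eval (fun j => if j = 0 then a₀ else b₀) (pderiv 1 g) ≠ 0) :
    Irreducible g ↔ Irreducible (MvPolynomial.map (algebraMap F ℂ) g) := by
  refine ⟨fun hg => ?_, irreducible_of_irreducible_map _⟩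
  rcases hsmooth with h | h
  · exact irreducible_map_of_smooth_point hzero h hg
  · exact irreducible_map_of_smooth_point hzero h hg
end

section
/- In ℤ[a,b] one has the factorizations f_{0,2} = (b−a)·((b−a)(b+2a)+1), f_{1,1} = (b−a)²·(b+2a), and f_{1,2} = f_{0,2}²·(b+2a)·((b−a)²+1). Moreover, the polynomial (b−a)²+1 is irreducible in ℚ[a,b] but reducible in ℂ[a,b]. -/
/-!
The factorizations rest on `P 1 = b` and on the identity
`z³ - 3a²z + 2a³ = (z - a)² (z + 2a)`, whose values at `z = b` and `z = P 2` give
`P 2 - P 1` and `P 3 - P 1`; moreover `P 2 + 2a = (b + 2a) ((b - a)² + 1)`.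

Over `ℂ` one has `(b - a)² + 1 = (b - a + i) (b - a - i)`, and each factor vanishes at a point,
so neither is a unit. Over `ℚ`, specializing `a = 0` turns `(b - a)² + 1` into the irreducible
polynomial `X² + 1` of the same degree `2`. In a factorization `u v`, one factor therefore
specializes to a unit, the other one to a polynomial of degree `2`; the latter already uses up
the whole total degree, so the former is a nonzero constant (`irreducible_of_specialization`).
-/

open MvPolynomial

theorem irreducible_X_sq_add_one : Irreducible (Polynomial.X ^ 2 + 1 : Polynomial ℚ) := by
  have hd : (Polynomial.X ^ 2 + 1 : Polynomial ℚ).natDegree = 2 := by compute_degree!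
  refine Polynomial.irreducible_of_degree_le_three_of_not_isRoot (by simp [hd]) fun x hx => ?_
  simp only [Polynomial.IsRoot.def, Polynomial.eval_add, Polynomial.eval_pow, Polynomial.eval_X,
    Polynomial.eval_one] at hx
  nlinarith [sq_nonneg x]

/-- A substitution of polynomials of degree at most one does not raise the degree beyond the
total degree. -/
theorem natDegree_aeval_le_totalDegree {K : Type*} [Field K] {σ : Type*}
    (g : σ → Polynomial K) (hg : ∀ i, (g i).natDegree ≤ 1) (p : MvPolynomial σ K) :
    (aeval g p).natDegree ≤ p.totalDegree := by
  simpa using aeval_natDegree_le p le_rfl g hg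

/-- If a substitution of polynomials of degree at most one sends `p` to an irreducible polynomial
whose degree is still the total degree of `p`, then `p` is irreducible. -/
theorem irreducible_of_specialization {K : Type*} [Field K] {σ : Type*}
    (g : σ → Polynomial K) (hg : ∀ i, (g i).natDegree ≤ 1) {p : MvPolynomial σ K}
    (hp : Irreducible (aeval g p)) (hdeg : p.totalDegree ≤ (aeval g p).natDegree) :
    Irreducible p := by
  have hp0 : p ≠ 0 := by
    rintro rfl
    exact hp.ne_zero (map_zero _)
  -- A factor whose cofactor specializes to a unit has the degree of `p`, so the cofactor is constant.
  have key : ∀ u v : MvPolynomial σ K, p = u * v → IsUnit (aeval g u) → IsUnit u := by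
    intro u v huv hu
    have hu0 : u ≠ 0 := by
      rintro rfl
      simp [huv] at hp0
    have hv0 : v ≠ 0 := by
      rintro rfl
      simp [huv] at hp0
    have hle := natDegree_aeval_le_totalDegree g hg v
    have htot : p.totalDegree = u.totalDegree + v.totalDegree := by
      rw [huv, totalDegree_mul_of_isDomain hu0 hv0]
    have hnat : (aeval g p).natDegree ≤ (aeval g v).natDegree := by
      rw [huv, map_mul]
      refine Polynomial.natDegree_mul_le.trans ?_
      rw [Polynomial.natDegree_eq_zero_of_isUnit hu, zero_add]
    have h0 : u.totalDegree = 0 := by omega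
    rw [totalDegree_eq_zero_iff_eq_C] at h0
    rw [h0] at hu0 ⊢
    refine IsUnit.map C (isUnit_iff_ne_zero.mpr fun h => hu0 ?_)
    rw [h, C_0]
  refine ⟨fun h => hp.not_isUnit (h.map (aeval g)), fun u v huv => ?_⟩
  have himg : aeval g p = aeval g u * aeval g v := by rw [huv, map_mul]
  rcases hp.isUnit_or_isUnit himg with h | h
  · exact Or.inl (key u v huv h)
  · exact Or.inr (key v u (by rw [huv, mul_comm]) h)

theorem P_one : P 1 = bP := by
  simp only [P]
  ring

theorem P_two : P 2 = bP ^ 3 - 3 * aP ^ 2 * bP + 2 * aP ^ 3 + bP := by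
  rw [P, P_one]

theorem P_three : P 3 = P 2 ^ 3 - 3 * aP ^ 2 * P 2 + 2 * aP ^ 3 + bP := by
  rw [P]

theorem map_sq_add_one (R : Type*) [CommRing R] :
    MvPolynomial.map (Int.castRingHom R) ((bP - aP) ^ 2 + 1) = (X 1 - X 0) ^ 2 + 1 := by
  simp [aP, bP]

theorem stmt9 :
    fkn 0 2 = (bP - aP) * ((bP - aP) * (bP + 2 * aP) + 1) ∧
    fkn 1 1 = (bP - aP) ^ 2 * (bP + 2 * aP) ∧
    fkn 1 2 = (fkn 0 2) ^ 2 * (bP + 2 * aP) * ((bP - aP) ^ 2 + 1) ∧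
    Irreducible (MvPolynomial.map (Int.castRingHom ℚ) ((bP - aP) ^ 2 + 1)) ∧
    (∃ u v : MvPolynomial (Fin 2) ℂ, ¬ IsUnit u ∧ ¬ IsUnit v ∧
      MvPolynomial.map (Int.castRingHom ℂ) ((bP - aP) ^ 2 + 1) = u * v) := by
  refine ⟨?_, ?_, ?_, ?_, X 1 - X 0 + C Complex.I, X 1 - X 0 - C Complex.I, ?_, ?_, ?_⟩
  · rw [fkn, P_two, P]
    ring
  · rw [fkn, P_two, P_one]
    ring
  · rw [fkn, fkn, P_three, P_two, P_one, P]
    ring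
  · rw [map_sq_add_one]
    have himg : aeval (R := ℚ) ![0, (Polynomial.X : Polynomial ℚ)] ((X 1 - X 0) ^ 2 + 1 : MvPolynomial (Fin 2) ℚ)
        = Polynomial.X ^ 2 + 1 := by simp
    refine irreducible_of_specialization (K := ℚ) ![0, Polynomial.X] (fun i => ?_) ?_ ?_
    · fin_cases i <;> simp [Polynomial.natDegree_X]
    · rw [himg]
      exact irreducible_X_sq_add_one
    · have hd : (Polynomial.X ^ 2 + 1 : Polynomial ℚ).natDegree = 2 := by compute_degree!
      rw [himg, hd]
      have h1 : (X 1 - X 0 : MvPolynomial (Fin 2) ℚ).totalDegree ≤ 1 :=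
        (totalDegree_sub _ _).trans (by simp)
      have h2 := totalDegree_pow (X 1 - X 0 : MvPolynomial (Fin 2) ℚ) 2
      refine (totalDegree_add _ _).trans (max_le (by omega) (by simp))
  · intro h
    simpa using h.map (eval (R := ℂ) ![0, -Complex.I])
  · intro h
    simpa using h.map (eval (R := ℂ) ![0, Complex.I])
  · rw [map_sq_add_one]
    have hI : (C Complex.I : MvPolynomial (Fin 2) ℂ) ^ 2 = -1 := by
      rw [← C_pow, Complex.I_sq, C_neg, C_1]
    linear_combination hI
end

section
/- For every integer k ≥ 0, the following congruences hold in ℤ[a,b] modulo 3 (equivalently, as identities in 𝔽₃[a,b]): f_{k,2} ≡ (b−a)^{3^k}·((b−a)²+1)^{3^k} (mod 3) and f_{k,1} ≡ (b−a)^{3^k} (mod 3). -/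
/-! Modulo 3 the recursion reads `P (m+1) ≡ P m ^ 3 + 2 a ^ 3 + b`, and cubing is additive, so
`f_{k+1,n} ≡ f_{k,n} ^ 3`. Both congruences follow by induction on `k` from
`f_{0,1} = b - a` and `f_{0,2} ≡ (b - a) ^ 3 + (b - a)`. -/

open MvPolynomial

/-- `f_{k+1,n} ≡ f_{k,n} ^ 3 (mod 3)`, stated for any representative `Q` of `f_{k,n}`. -/
theorem three_dvd_fkn_succ {k n : ℕ} {Q : MvPolynomial (Fin 2) ℤ}
    (h : (3 : MvPolynomial (Fin 2) ℤ) ∣ fkn k n - Q) :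
    (3 : MvPolynomial (Fin 2) ℤ) ∣ fkn (k + 1) n - Q ^ 3 := by
  obtain ⟨c, hc⟩ := h
  have hx : P (k + n) = P k + Q + 3 * c := by
    unfold fkn at hc
    linear_combination hc
  refine ⟨P (k + n) * P k * (P (k + n) - P k) - aP ^ 2 * (P (k + n) - P k)
    + 3 * Q ^ 2 * c + 9 * Q * c ^ 2 + 9 * c ^ 3, ?_⟩
  unfold fkn
  rw [show k + 1 + n = (k + n) + 1 by ring, P, P, hx]
  ring

/-- If `f_{0,n} ≡ Q (mod 3)`, then `f_{k,n} ≡ Q ^ (3 ^ k) (mod 3)`. -/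
theorem three_dvd_fkn_sub_pow {n : ℕ} {Q : MvPolynomial (Fin 2) ℤ}
    (h : (3 : MvPolynomial (Fin 2) ℤ) ∣ fkn 0 n - Q) (k : ℕ) :
    (3 : MvPolynomial (Fin 2) ℤ) ∣ fkn k n - Q ^ 3 ^ k := by
  induction k with
  | zero => simpa using h
  | succ k ih =>
    rw [pow_succ 3 k, pow_mul]
    exact three_dvd_fkn_succ ih

/-- For every `k ≥ 0`, in `ℤ[a,b]` one has
`f_{k,2} ≡ (b-a)^{3^k}·((b-a)²+1)^{3^k} (mod 3)` and `f_{k,1} ≡ (b-a)^{3^k} (mod 3)`. -/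
theorem stmt11 (k : ℕ) :
    (3 : MvPolynomial (Fin 2) ℤ) ∣
      (fkn k 2 - (bP - aP) ^ (3 ^ k) * ((bP - aP) ^ 2 + 1) ^ (3 ^ k)) ∧
    (3 : MvPolynomial (Fin 2) ℤ) ∣ (fkn k 1 - (bP - aP) ^ (3 ^ k)) := by
  constructor
  · rw [← mul_pow]
    refine three_dvd_fkn_sub_pow
      ⟨-aP ^ 2 * bP + aP ^ 3 + bP ^ 2 * aP - bP * aP ^ 2, ?_⟩ k
    simp only [fkn, P]
    ring
  · refine three_dvd_fkn_sub_pow ⟨0, ?_⟩ k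
    simp only [fkn, P]
    ring
end

section
/- For every integer k ≥ 1, f_{0,2}² divides f_{k,2} in ℤ[a,b]. Moreover, for every even integer k ≥ 2: f_{0,2} divides f_{0,k}, f_{0,2}² does not divide f_{0,k}, and ((b−a)(b+2a)+1)² does not divide f_{0,k} in ℤ[a,b]. -/
/-!
The point `a` is critical for `f`: `f(z) - f(a) = (z - a)² (z + 2a)`. With `g = f_{0,2} = f²(a) - a`,
taking `z = f²(a)` shows that `g²` divides `f_{1,2}`, and since `f(z) - f(w)` is a multiple of `z - w`,
`g²` divides every `f_{k,2}` with `k ≥ 1`. Telescoping in steps of two gives `f_{0,k} ≡ g` mod `g²` for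
even `k ≥ 2`. Write `g = (b - a) h`. If `h²` divided `f_{0,k}`, it would divide `g`, hence `h` would
divide `b - a`; this fails at the rational point `(2/3, -1/3)`, where `h` vanishes and `b - a` does not.
-/

open MvPolynomial

lemma P_succ (m : ℕ) : P (m + 1) = (P m) ^ 3 - 3 * aP ^ 2 * (P m) + 2 * aP ^ 3 + bP := rfl

lemma fkn_zero_two : fkn 0 2 = (bP - aP) * ((bP - aP) * (bP + 2 * aP) + 1) := by
  simp only [fkn, P]
  ring

/-- The base case is the double root of `f(z) - f(a)` at `z = a`; the step is `z - w ∣ f(z) - f(w)`. -/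
lemma sq_fkn_dvd (k : ℕ) : (fkn 0 2) ^ 2 ∣ fkn (k + 1) 2 := by
  induction k with
  | zero =>
    refine ⟨P 2 + 2 * aP, ?_⟩
    have h3 : fkn (0 + 1) 2 = P (2 + 1) - P (0 + 1) := rfl
    have h2 : fkn 0 2 = P 2 - aP := rfl
    have h0 : P 0 = aP := rfl
    rw [h3, h2, P_succ 2, P_succ 0, h0]
    ring
  | succ k ih =>
    refine ih.trans ⟨P (k + 3) ^ 2 + P (k + 3) * P (k + 1) + P (k + 1) ^ 2 - 3 * aP ^ 2, ?_⟩
    have h3 : fkn (k + 1 + 1) 2 = P (k + 3 + 1) - P (k + 1 + 1) := rfl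
    have h2 : fkn (k + 1) 2 = P (k + 3) - P (k + 1) := rfl
    rw [h3, h2, P_succ (k + 3), P_succ (k + 1)]
    ring

/-- `f_{0,k} ≡ f_{0,2}` modulo `f_{0,2}²` for even `k = 2 (j + 1)`. -/
lemma sq_dvd_fkn_zero_sub (j : ℕ) : (fkn 0 2) ^ 2 ∣ fkn 0 (2 * (j + 1)) - fkn 0 2 := by
  induction j with
  | zero => simp
  | succ j ih =>
    have h : fkn 0 (2 * (j + 1 + 1)) - fkn 0 2
        = (fkn 0 (2 * (j + 1)) - fkn 0 2) + fkn (2 * j + 1 + 1) 2 := by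
      simp only [fkn, Nat.zero_add, show 2 * (j + 1 + 1) = 2 * j + 1 + 1 + 2 by ring,
        show 2 * (j + 1) = 2 * j + 1 + 1 by ring]
      ring
    rw [h]
    exact dvd_add ih (sq_fkn_dvd _)

/-- At `(2/3, -1/3)` the left-hand side vanishes, while `b - a = -1`. -/
lemma not_h_dvd : ¬ ((bP - aP) * (bP + 2 * aP) + 1) ∣ bP - aP := by
  rintro ⟨c, hc⟩
  have h := congrArg (aeval (![2 / 3, -1 / 3] : Fin 2 → ℚ)) hc
  simp only [aP, bP, map_mul, map_add, map_sub, map_one, map_ofNat, aeval_X,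
    Matrix.cons_val_zero, Matrix.cons_val_one] at h
  norm_num at h

lemma h_ne_zero : ((bP - aP) * (bP + 2 * aP) + 1) ≠ 0 := by
  intro h0
  have h := congrArg (aeval (![0, 0] : Fin 2 → ℚ)) h0
  simp [aP, bP] at h

theorem stmt12 :
    (∀ k : ℕ, 1 ≤ k → (fkn 0 2) ^ 2 ∣ fkn k 2) ∧
    (∀ k : ℕ, 2 ≤ k → Even k →
      (fkn 0 2 ∣ fkn 0 k ∧ ¬ (fkn 0 2) ^ 2 ∣ fkn 0 k ∧
        ¬ ((bP - aP) * (bP + 2 * aP) + 1) ^ 2 ∣ fkn 0 k)) := by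
  refine ⟨fun k hk => ?_, fun k hk hev => ?_⟩
  · obtain ⟨j, rfl⟩ := Nat.exists_eq_add_of_le' hk
    exact sq_fkn_dvd j
  · obtain ⟨j, rfl⟩ : ∃ j, k = 2 * (j + 1) := by
      obtain ⟨r, rfl⟩ := hev
      exact ⟨r - 1, by omega⟩
    have hsub := sq_dvd_fkn_zero_sub j
    have hsq : ((bP - aP) * (bP + 2 * aP) + 1) ^ 2 ∣ (fkn 0 2) ^ 2 := by
      rw [fkn_zero_two]
      exact pow_dvd_pow_of_dvd (dvd_mul_left _ _) 2
    have hnot : ¬ ((bP - aP) * (bP + 2 * aP) + 1) ^ 2 ∣ fkn 0 (2 * (j + 1)) := by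
      intro hd
      have hg : ((bP - aP) * (bP + 2 * aP) + 1) ^ 2 ∣ fkn 0 2 :=
        (dvd_sub_right hd).1 (hsq.trans hsub)
      rw [fkn_zero_two, sq] at hg
      exact not_h_dvd ((mul_dvd_mul_iff_right h_ne_zero).1 hg)
    refine ⟨?_, fun hd => hnot (hsq.trans hd), hnot⟩
    exact (dvd_sub_left dvd_rfl).1 ((dvd_pow_self _ two_ne_zero).trans hsub)
end

section
/- For every integer k ≥ 1: (existence) there exists an irreducible polynomial p ∈ ℚ[a,b] that divides f_{k,2} but does not divide f_{k,1}·f_{k−1,2}; (uniqueness) any two irreducible polynomials in ℚ[a,b] dividing f_{k,2} and not dividing f_{k,1}·f_{k−1,2} are associates; and (multiplicity one) for such p, p² does not divide f_{k,2} in ℚ[a,b]. Equivalently, the polynomial h_{k,2} is irreducible in ℚ[a,b]. -/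
/-!
Put `c = b - a` and work in `ℤ[a][c]`, where `f_{0,1} = c` and `f_{0,2} = c * h0` with
`h0 = c² + 3ac + 1`. Since `f(z) - f(w) = (z - w)(z² + zw + w² - 3a²)`, one gets
`f_{j+1,1} = f_{j,1} * U_j` and `f_{j+1,2} = f_{j,2} * U_j * T_j` with `T_j` explicit. The new
factor of `f_{j+1,2}` is `H = T_j` for odd `j` and `H = T_j / h0` for even `j`.

* Modulo `3` the map is `z ↦ z³ - a³ + b`, so `f_{m,n} ≡ f_{0,n} ^ 3^m` and
  `T_j ≡ (c² + 1) ^ (2 * 3^j) ≡ h0 ^ (2 * 3^j)`, where `c² + 1` is irreducible over `𝔽₃(a)`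
  (`redX_T`, `q_irreducible`).
* On the curve `h0 = 0` the critical point `a` has period two, and because `a` is critical the
  orbit is known modulo `h0²` at every step needed (`h0_step`). This gives `T_j ≡ 3 + 3ac` modulo
  `h0` for odd `j` (`T_odd`), while for even `j` it gives `h0 ∣ T_j` with
  `T_j / h0 ≡ -3ac` or `-6ac` modulo `h0` (`T_even`). In either case the remainder of `H` modulo
  `h0` is nonzero modulo `9`.

By Schönemann's criterion at `3` with respect to `h0` (`irreducible_of_schonemann`), `H` is
irreducible over `ℤ[a]`, and by Gauss's lemma over `ℚ[a]`. Comparing exponents of `c² + 1` modulo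
`3` shows that `H` does not divide `f_{j+1,1} * f_{j,2}` for `j ≥ 1` (`not_dvd_of_red`); for
`j = 0` one has `H = c² + 1`, and evaluation at `a = 1`, `c = i` suffices (`not_dvd_zero`). The
remaining factors of `f_{j+1,2}` all divide the square of that product (`factorization`).
-/


open MvPolynomial

/-- `f_{k,n} = f^{k+n}(a) - f^k(a)`, viewed in `ℚ[a,b]`. -/
noncomputable def F (k n : ℕ) : MvPolynomial (Fin 2) ℚ :=
  MvPolynomial.map (Int.castRingHom ℚ) (P (k + n) - P k)

/-- The orbit of `a` under `z ↦ z³ - 3a²z + 2a³ + b`, over any commutative ring. -/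
def orb {S : Type*} [CommRing S] (a b : S) : ℕ → S
  | 0 => a
  | m + 1 => (orb a b m) ^ 3 - 3 * a ^ 2 * (orb a b m) + 2 * a ^ 3 + b

lemma map_orb {S T : Type*} [CommRing S] [CommRing T] (φ : S →+* T) (a b : S) (m : ℕ) :
    φ (orb a b m) = orb (φ a) (φ b) m := by
  induction m with
  | zero => rfl
  | succ m ih => simp [orb, ih, map_ofNat φ]

lemma P_eq_orb (m : ℕ) : P m = orb aP bP m := by
  induction m with
  | zero => rfl
  | succ m ih => simp [orb, P, ih]

/-- In characteristic `3` the differences `f_{m,n}` are the `3^m`-th powers of `f_{0,n}`. -/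
lemma orb_sub_char_three {S : Type*} [CommRing S] (h3 : (3 : S) = 0) (a b : S) (m n : ℕ) :
    orb a b (m + n) - orb a b m = (orb a b n - a) ^ 3 ^ m := by
  induction m with
  | zero => simp [orb]
  | succ m ih =>
    rw [pow_succ, pow_mul, ← ih, show m + 1 + n = (m + n) + 1 by ring]
    simp only [orb]
    linear_combination (a ^ 2 * (orb a b m - orb a b (m + n)) +
      orb a b (m + n) ^ 2 * orb a b m - orb a b (m + n) * orb a b m ^ 2) * h3

namespace CubicOrbit

/-- The parameter `a` in `ℤ[a][c]`, where `c = b - a` is the outer variable. -/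
noncomputable def A : Polynomial (Polynomial ℤ) := Polynomial.C Polynomial.X

/-- The variable `c = b - a` in `ℤ[a][c]`. -/
noncomputable def c : Polynomial (Polynomial ℤ) := Polynomial.X

/-- The polynomial `P_m` in the coordinates `a` and `c = b - a`. -/
noncomputable def Q (m : ℕ) : Polynomial (Polynomial ℤ) := orb A (c + A) m

/-- The period-two polynomial `f_{0,2} / f_{0,1}` in the coordinates `a` and `c = b - a`. -/
noncomputable def h0 : Polynomial (Polynomial ℤ) := c ^ 2 + 3 * A * c + 1

/-- The quotient `f_{j+1,1} / f_{j,1}`. -/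
noncomputable def U (j : ℕ) : Polynomial (Polynomial ℤ) :=
  Q (j + 1) ^ 2 + Q (j + 1) * Q j + Q j ^ 2 - 3 * A ^ 2

/-- The quotient `f_{j+1,2} / (f_{j,2} U_j)`. -/
noncomputable def T (j : ℕ) : Polynomial (Polynomial ℤ) :=
  1 + (Q (j + 1) - Q j) * (Q (j + 2) + Q (j + 1) + Q j)

lemma C_three {S : Type*} [CommRing S] : (Polynomial.C 3 : Polynomial S) = 3 :=
  map_ofNat Polynomial.C 3

lemma Q_zero : Q 0 = A := rfl

lemma Q_succ (m : ℕ) : Q (m + 1) = Q m ^ 3 - 3 * A ^ 2 * Q m + 2 * A ^ 3 + (c + A) := rfl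

lemma Q_one : Q 1 = c + A := by rw [Q_succ, Q_zero]; ring

lemma Q_two : Q 2 = A + c * h0 := by rw [Q_succ, Q_one, h0]; ring

lemma sub_one_eq (j : ℕ) : Q (j + 2) - Q (j + 1) = (Q (j + 1) - Q j) * U j := by
  rw [U, Q_succ (j + 1)]
  nth_rewrite 3 [Q_succ j]
  ring

lemma sub_two_eq (j : ℕ) : Q (j + 3) - Q (j + 1) = (Q (j + 2) - Q j) * (U j * T j) := by
  have h : U j * T j = Q (j + 2) ^ 2 + Q (j + 2) * Q j + Q j ^ 2 - 3 * A ^ 2 := by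
    have := sub_one_eq j
    have h2 : U j * T j = U j + ((Q (j + 1) - Q j) * U j) * (Q (j + 2) + Q (j + 1) + Q j) := by
      rw [T]; ring
    rw [h2, ← this, U]; ring
  rw [h, Q_succ (j + 2)]
  nth_rewrite 1 [Q_succ j]
  ring

/-! ### Orbits along the period-two curve -/

/-- `f` is critical at `a`, so an orbit point congruent to `a` modulo `h0` has its next two
images congruent to those of `a` modulo `h0 ^ 2`. -/
lemma h0_step (m : ℕ) (h : h0 ∣ Q m - A) :
    h0 ^ 2 ∣ Q (m + 1) - (c + A) ∧ h0 ^ 2 ∣ Q (m + 2) - (A + c * h0) := by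
  have h1 : h0 ^ 2 ∣ Q (m + 1) - (c + A) := by
    have : Q (m + 1) - (c + A) = (Q m - A) ^ 2 * (Q m + 2 * A) := by rw [Q_succ]; ring
    rw [this]
    exact (pow_dvd_pow_of_dvd h 2).mul_right _
  refine ⟨h1, ?_⟩
  have : Q (m + 2) - (A + c * h0) = (Q (m + 1) - (c + A)) *
      (Q (m + 1) ^ 2 + Q (m + 1) * (c + A) + (c + A) ^ 2 - 3 * A ^ 2) := by
    rw [Q_succ (m + 1), h0]; ring
  rw [this]
  exact h1.mul_right _

lemma h0_dvd (i : ℕ) : h0 ∣ Q (2 * i) - A := by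
  induction i with
  | zero => simp [Q_zero]
  | succ i ih =>
    obtain ⟨x, hx⟩ := (h0_step _ ih).2
    exact ⟨c + h0 * x, by rw [show 2 * (i + 1) = 2 * i + 2 by ring]; linear_combination hx⟩

lemma T_odd (i : ℕ) : ∃ t, T (2 * i + 1) = h0 * t + (3 + 3 * A * c) := by
  obtain ⟨x, hx⟩ := (h0_step _ (h0_dvd i)).1
  obtain ⟨y, hy⟩ := h0_dvd (i + 1)
  obtain ⟨z, hz⟩ := (h0_step _ (h0_dvd (i + 1))).1
  rw [show 2 * (i + 1) = 2 * i + 2 by ring] at hy hz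
  have hx' : Q (2 * i + 1) = c + A + h0 ^ 2 * x := by linear_combination hx
  have hy' : Q (2 * i + 1 + 1) = A + h0 * y := by linear_combination hy
  have hz' : Q (2 * i + 1 + 2) = c + A + h0 ^ 2 * z := by linear_combination hz
  refine ⟨-2 - c * (h0 * z + y + h0 * x) + (y - h0 * x) *
    (2 * c + 3 * A + h0 ^ 2 * z + h0 * y + h0 ^ 2 * x), ?_⟩
  rw [T, hx', hy', hz', h0]
  ring

/-- For even `j` the factor `h0` splits off from `T j`, and the cofactor is explicit modulo
`h0`. The coefficient is `-3` for `j = 0` and `-6` for `j > 0`. -/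
lemma T_even (i : ℕ) : ∃ H t, ∃ d : ℤ, ¬ (9 ∣ d) ∧ T (2 * i) = h0 * H ∧
    H = h0 * t + Polynomial.C (Polynomial.C d * Polynomial.X) * c := by
  obtain ⟨x, hx⟩ := (h0_step _ (h0_dvd i)).1
  obtain ⟨y, hy⟩ := (h0_step _ (h0_dvd i)).2
  have hz : ∃ δ : ℤ, ∃ z, (δ = 0 ∨ δ = 1) ∧ Q (2 * i) = A + δ * (c * h0) + h0 ^ 2 * z := by
    rcases i with _ | i
    · exact ⟨0, 0, by simp, by simp [Q_zero]⟩
    · obtain ⟨z, hz⟩ := (h0_step _ (h0_dvd i)).2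
      refine ⟨1, z, by simp, ?_⟩
      rw [show 2 * (i + 1) = 2 * i + 2 by ring]
      push_cast
      linear_combination hz
  obtain ⟨δ, z, hδ, hz⟩ := hz
  have hx' : Q (2 * i + 1) = c + A + h0 ^ 2 * x := by linear_combination hx
  have hy' : Q (2 * i + 2) = A + c * h0 + h0 ^ 2 * y := by linear_combination hy
  obtain ⟨M, hM⟩ : ∃ M, M = -(δ * (1 + δ)) * c ^ 2 + c * (x + y + z) + (x - z) * (3 * A + c) +
    h0 * ((x - z) * (1 + δ) * c - δ * c * (x + y + z)) + h0 ^ 2 * (x - z) * (x + y + z) := ⟨_, rfl⟩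
  refine ⟨1 + c ^ 2 - 3 * δ * A * c + h0 * M, 1 + M, -3 * (1 + δ), ?_, ?_, ?_⟩
  · rcases hδ with rfl | rfl <;> decide
  · rw [T, hx', hy', hz, hM, h0]
    ring
  · have : Polynomial.C (Polynomial.C (-3 * (1 + δ)) * Polynomial.X) =
        -3 * (1 + (δ : Polynomial (Polynomial ℤ))) * A := by
      simp [A, C_three]
      ring
    rw [this, h0]
    ring

/-! ### Monicity -/

lemma Q_monic (m : ℕ) : (Q (m + 1)).Monic ∧ (Q (m + 1)).natDegree = 3 ^ m := by
  induction m with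
  | zero =>
    have : Q (0 + 1) = Polynomial.X + Polynomial.C Polynomial.X := Q_one
    rw [this]
    exact ⟨Polynomial.monic_X_add_C _, by simp⟩
  | succ m ih =>
    obtain ⟨hm, hd⟩ := ih
    have h3 : (Q (m + 1) ^ 3).natDegree = 3 ^ (m + 1) := by
      rw [hm.natDegree_pow, hd]; ring
    have e : Q (m + 1 + 1) = Q (m + 1) ^ 3 + (Polynomial.C (-3 * Polynomial.X ^ 2) * Q (m + 1) +
        (Polynomial.X + Polynomial.C (2 * Polynomial.X ^ 3 + Polynomial.X))) := by
      rw [Q_succ (m + 1)]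
      simp only [A, c, map_mul, map_pow, map_neg, map_add, map_ofNat]
      ring
    have hpos : 1 ≤ 3 ^ m := Nat.one_le_pow _ _ (by norm_num)
    have hlt : (Polynomial.C (-3 * Polynomial.X ^ 2) * Q (m + 1) +
        (Polynomial.X + Polynomial.C (2 * Polynomial.X ^ 3 + Polynomial.X))).natDegree
        < (Q (m + 1) ^ 3).natDegree := by
      rw [h3]
      refine lt_of_le_of_lt (Polynomial.natDegree_add_le_of_degree_le (n := 3 ^ m) ?_ ?_) ?_
      · exact (Polynomial.natDegree_C_mul_le _ _).trans hd.le
      · rw [Polynomial.natDegree_X_add_C]; exact hpos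
      · rw [pow_succ]; omega
    rw [e]
    refine ⟨(hm.pow 3).add_of_left (Polynomial.degree_lt_degree hlt), ?_⟩
    rw [Polynomial.natDegree_add_eq_left_of_natDegree_lt hlt, h3]

lemma sub_monic (j n : ℕ) : (Q (j + (n + 1)) - Q j).Monic := by
  have h1 := Q_monic (j + n)
  rw [show j + (n + 1) = j + n + 1 by ring]
  refine h1.1.sub_of_left (Polynomial.degree_lt_degree ?_)
  rw [h1.2]
  rcases j with _ | j
  · rw [Q_zero, A, Polynomial.natDegree_C]; positivity
  · rw [(Q_monic j).2]
    exact Nat.pow_lt_pow_right (by norm_num) (by omega)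

lemma U_monic (j : ℕ) : (U j).Monic :=
  (sub_monic j 0).of_mul_monic_left (by
    have := sub_monic (j + 1) 0
    rwa [show j + 1 + (0 + 1) = j + 2 by ring, sub_one_eq j] at this)

lemma T_monic (j : ℕ) : (T j).Monic :=
  (U_monic j).of_mul_monic_left <| (sub_monic j 1).of_mul_monic_left (by
    have := sub_monic (j + 1) 1
    rwa [show j + 1 + (1 + 1) = j + 3 by ring, sub_two_eq j] at this)

lemma h0_eq : h0 = Polynomial.X ^ 2 + Polynomial.C (3 * Polynomial.X) * Polynomial.X +
    Polynomial.C 1 := by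
  simp [h0, A, c, C_three]

lemma h0_monic : h0.Monic := by
  rw [h0_eq]; monicity!

lemma h0_natDegree : h0.natDegree = 2 := by
  rw [h0_eq]; compute_degree!

/-! ### Reduction modulo 3 -/

/-- The field `𝔽₃(a)`. -/
abbrev K := FractionRing (Polynomial (ZMod 3))

/-- Reduction modulo `3`, from `ℤ[a]` to `𝔽₃(a)`. -/
noncomputable def red : Polynomial ℤ →+* K :=
  (algebraMap (Polynomial (ZMod 3)) K).comp (Polynomial.mapRingHom (Int.castRingHom (ZMod 3)))

/-- Reduction modulo `3`, from `ℤ[a][c]` to `𝔽₃(a)[c]`. -/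
noncomputable def redX : Polynomial (Polynomial ℤ) →+* Polynomial K := Polynomial.mapRingHom red

lemma three_eq_zero : (3 : Polynomial K) = 0 := by
  have h : (3 : Polynomial (ZMod 3)) = 0 := by
    have : (3 : ZMod 3) = 0 := by decide
    rw [← map_ofNat (Polynomial.C : ZMod 3 →+* _) 3, this, map_zero]
  have h' : (3 : K) = 0 := by
    rw [← map_ofNat (algebraMap (Polynomial (ZMod 3)) K) 3, h, map_zero]
  rw [← map_ofNat (Polynomial.C : K →+* _) 3, h', map_zero]

lemma redX_c : redX c = Polynomial.X := by simp [redX, c]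

lemma redX_sub (m n : ℕ) :
    redX (Q (m + n) - Q m) = (redX (Q n - A)) ^ 3 ^ m := by
  simp only [map_sub, Q, map_orb]
  exact orb_sub_char_three three_eq_zero _ _ m n

/-- `c² + 1` over `𝔽₃(a)`. -/
noncomputable def q : Polynomial K := Polynomial.X ^ 2 + 1

lemma redX_h0 : redX h0 = q := by
  simp only [h0, map_add, map_mul, map_pow, redX_c, map_ofNat, three_eq_zero, map_one, q]
  ring

lemma redX_one (m : ℕ) : redX (Q (m + 1) - Q m) = Polynomial.X ^ 3 ^ m := by
  rw [redX_sub, Q_one, add_sub_cancel_right, redX_c]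

lemma redX_two (m : ℕ) : redX (Q (m + 2) - Q m) = (Polynomial.X * q) ^ 3 ^ m := by
  rw [redX_sub, Q_two, add_sub_cancel_left, map_mul, redX_c, redX_h0]

lemma redX_U (j : ℕ) : redX (U j) = Polynomial.X ^ (2 * 3 ^ j) := by
  have h := congrArg redX (sub_one_eq j)
  rw [map_mul, redX_one, redX_one] at h
  have h0 : (Polynomial.X : Polynomial K) ^ 3 ^ j ≠ 0 := pow_ne_zero _ Polynomial.X_ne_zero
  refine mul_left_cancel₀ h0 ?_
  rw [← h, ← pow_add]
  congr 1
  ring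

lemma q_monic : q.Monic := by rw [q]; monicity!

lemma q_natDegree : q.natDegree = 2 := by rw [q]; compute_degree!

lemma redX_T (j : ℕ) : redX (T j) = q ^ (2 * 3 ^ j) := by
  have h := congrArg redX (sub_two_eq j)
  have e : redX (Q (j + 3) - Q (j + 1)) = (Polynomial.X * q) ^ 3 ^ (j + 1) := redX_two (j + 1)
  rw [e, map_mul, map_mul, redX_two, redX_U] at h
  have h0 : (Polynomial.X * q) ^ 3 ^ j * Polynomial.X ^ (2 * 3 ^ j) ≠ 0 :=
    mul_ne_zero (pow_ne_zero _ (mul_ne_zero Polynomial.X_ne_zero q_monic.ne_zero))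
      (pow_ne_zero _ Polynomial.X_ne_zero)
  refine mul_left_cancel₀ h0 ?_
  rw [mul_assoc, ← h]
  rw [mul_pow, mul_pow]
  ring

/-- `-1` is not a square in `𝔽₃(a)`: a square root would be integral over `𝔽₃[a]`, hence a
polynomial, and specialising `a = 0` would give a square root of `-1` in `𝔽₃`. -/
lemma q_irreducible : Irreducible q := by
  rw [q_monic.irreducible_iff_roots_eq_zero_of_degree_le_three
    q_natDegree.ge (q_natDegree.le.trans (by norm_num))]
  refine Multiset.eq_zero_of_forall_notMem fun r hr => ?_
  have hr : r ^ 2 + 1 = 0 := by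
    have := Polynomial.isRoot_of_mem_roots hr
    simpa [q, Polynomial.IsRoot] using this
  have hint : IsIntegral (Polynomial (ZMod 3)) r :=
    ⟨Polynomial.X ^ 2 + 1, by monicity!, by simpa using hr⟩
  obtain ⟨p, rfl⟩ := IsIntegrallyClosed.isIntegral_iff.1 hint
  have hp : p ^ 2 + 1 = 0 := by
    apply IsFractionRing.injective (Polynomial (ZMod 3)) K
    simpa using hr
  have h := congrArg (Polynomial.eval 0) hp
  simp only [Polynomial.eval_add, Polynomial.eval_pow, Polynomial.eval_one,
    Polynomial.eval_zero] at h
  generalize Polynomial.eval 0 p = s at h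
  revert s
  decide

lemma dvd_of_red_eq_zero {x : Polynomial ℤ} (hx : red x = 0) : (3 : Polynomial ℤ) ∣ x := by
  have h : x.map (Int.castRingHom (ZMod 3)) = 0 := by
    apply IsFractionRing.injective (Polynomial (ZMod 3)) K
    simpa [red] using hx
  rw [← map_ofNat (Polynomial.C : ℤ →+* _) 3, Polynomial.C_dvd_iff_dvd_coeff]
  intro i
  have := congrArg (Polynomial.coeff · i) h
  simp only [Polynomial.coeff_map, Polynomial.coeff_zero, eq_intCast] at this
  exact (ZMod.intCast_zmod_eq_zero_iff_dvd _ 3).1 this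

/-- Schönemann's criterion at the prime `3` with respect to `h0`. -/
lemma irreducible_of_schonemann {H t r : Polynomial (Polynomial ℤ)} {N : ℕ} (hm : H.Monic)
    (hN : N ≠ 0) (hred : redX H = q ^ N) (hH : H = h0 * t + r) (hr : r.degree < 2)
    (i l : ℕ) (hil : ¬ (9 : ℤ) ∣ (r.coeff i).coeff l) : Irreducible H := by
  let _ : Algebra (Polynomial ℤ) K := red.toAlgebra
  have ha : algebraMap (Polynomial ℤ) K = red := rfl
  have hmap : ∀ x : Polynomial (Polynomial ℤ), x.map (algebraMap (Polynomial ℤ) K) = redX x :=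
    fun _ => rfl
  have hdeg : H.natDegree ≠ 0 := by
    have h1 : (redX H).natDegree = H.natDegree := hm.natDegree_map _
    rw [← h1, hred, q_monic.natDegree_pow, q_natDegree]
    omega
  have hmod : H %ₘ h0 = r := by
    refine (Polynomial.div_modByMonic_unique t r h0_monic ⟨by rw [hH]; ring, ?_⟩).2
    rw [Polynomial.degree_eq_natDegree h0_monic.ne_zero, h0_natDegree]
    exact hr
  refine Polynomial.generalizedEisenstein (K := K) (q := h0) (p := N) ?_ h0_monic
    hm.isPrimitive (Nat.pos_of_ne_zero hdeg) ?_ ?_ ?_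
  · rw [hmap, redX_h0]; exact q_irreducible
  · rw [hm.leadingCoeff, map_one]; exact one_ne_zero
  · rw [hm.leadingCoeff, map_one, map_one, one_mul, hmap, hmap, hred, redX_h0]
  · rw [hmod]
    intro h
    apply hil
    have h1 := congrArg (Polynomial.coeff · i) h
    simp only [Polynomial.coeff_map, Polynomial.coeff_zero, Ideal.Quotient.eq_zero_iff_mem] at h1
    have hle : RingHom.ker (algebraMap (Polynomial ℤ) K) ≤ Ideal.span {3} := fun x hx =>
      Ideal.mem_span_singleton.2 (dvd_of_red_eq_zero hx)
    have h2 := Ideal.pow_right_mono hle 2 h1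
    rw [Ideal.span_singleton_pow, Ideal.mem_span_singleton] at h2
    have h3 : (Polynomial.C 9 : Polynomial ℤ) ∣ r.coeff i := by
      convert h2 using 1
      rw [map_ofNat]; norm_num
    exact Polynomial.C_dvd_iff_dvd_coeff _ _ |>.1 h3 l

/-! ### The new factor -/

lemma not_dvd_of_red {H : Polynomial (Polynomial ℤ)} {N j : ℕ} (hred : redX H = q ^ N)
    (hN : 3 ^ j < N) : ¬ H ∣ (Q (j + 2) - Q (j + 1)) * (Q (j + 2) - Q j) := by
  intro h
  have h1 := map_dvd redX h
  rw [hred, map_mul, redX_two, redX_one (j + 1), mul_pow, ← mul_assoc, ← pow_add] at h1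
  have hc : IsCoprime q Polynomial.X := ⟨1, -Polynomial.X, by rw [q]; ring⟩
  have h2 := (hc.pow (m := N)).dvd_of_dvd_mul_left h1
  have := (pow_dvd_pow_iff q_irreducible.ne_zero q_irreducible.not_isUnit).1 h2
  omega

/-- At `a = 1`, `c = i` the polynomial `c² + 1` vanishes and `f_{1,1} f_{0,2}` does not. -/
lemma not_dvd_zero {H : Polynomial (Polynomial ℤ)} (hH : T 0 = h0 * H) :
    ¬ H ∣ (Q 2 - Q 1) * (Q 2 - Q 0) := by
  have hT : T 0 = h0 * (c ^ 2 + 1) := by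
    rw [T, Q_two, Q_one, Q_zero, h0]; ring
  have hH' : H = c ^ 2 + 1 := mul_left_cancel₀ h0_monic.ne_zero (hH ▸ hT)
  rw [hH', Q_two, Q_one, Q_zero, h0]
  intro h
  let ρ : Polynomial (Polynomial ℤ) →+* ℂ :=
    Polynomial.eval₂RingHom (Polynomial.eval₂RingHom (Int.castRingHom ℂ) 1) Complex.I
  have hA : ρ A = 1 := by simp [ρ, A]
  have hc : ρ c = Complex.I := by simp [ρ, c]
  have h1 := map_dvd ρ h
  simp only [map_mul, map_add, map_sub, map_pow, map_one, map_ofNat, hA, hc, Complex.I_sq] at h1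
  rw [neg_add_cancel, zero_dvd_iff] at h1
  have h2 := congrArg Complex.re h1
  simp at h2

/-- `f_{j+1,2}` factors as `B * H` with `H` monic, irreducible and not dividing
`f_{j+1,1} f_{j,2}`, whereas every irreducible factor of `B` divides that product. -/
lemma factorization (j : ℕ) : ∃ B H : Polynomial (Polynomial ℤ), H.Monic ∧ Irreducible H ∧
    Q (j + 3) - Q (j + 1) = B * H ∧
    B ∣ ((Q (j + 2) - Q (j + 1)) * (Q (j + 2) - Q j)) ^ 2 ∧
    ¬ H ∣ (Q (j + 2) - Q (j + 1)) * (Q (j + 2) - Q j) := by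
  have hpos : 1 ≤ 3 ^ j := Nat.one_le_pow _ _ (by norm_num)
  rcases Nat.even_or_odd' j with ⟨i, rfl | rfl⟩
  · obtain ⟨H, t, d, hd, hT, hH⟩ := T_even i
    have hm : H.Monic := h0_monic.of_mul_monic_left (hT ▸ T_monic _)
    have hred : redX H = q ^ (2 * 3 ^ (2 * i) - 1) := by
      have h := redX_T (2 * i)
      rw [hT, map_mul, redX_h0] at h
      refine mul_left_cancel₀ q_monic.ne_zero ?_
      rw [h, ← pow_succ']
      congr 1
      omega
    obtain ⟨y, hy⟩ : h0 ∣ Q (2 * i + 2) - Q (2 * i) := by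
      have := dvd_sub (h0_dvd (i + 1)) (h0_dvd i)
      rwa [sub_sub_sub_cancel_right] at this
    refine ⟨(Q (2 * i + 2) - Q (2 * i)) * U (2 * i) * h0, H, hm, ?_, ?_, ?_, ?_⟩
    · refine irreducible_of_schonemann hm (by omega) hred hH ?_ 1 1 ?_
      · exact lt_of_le_of_lt (Polynomial.degree_C_mul_X_le _) (by norm_num)
      · simpa [c] using hd
    · rw [sub_two_eq, hT]; ring
    · refine ⟨(Q (2 * i + 1) - Q (2 * i)) * (Q (2 * i + 2) - Q (2 * i + 1)) * y, ?_⟩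
      rw [mul_pow, sq (Q (2 * i + 2) - Q (2 * i))]
      nth_rewrite 2 [hy]
      rw [sq, sub_one_eq]; ring
    · rcases i with _ | i
      · exact not_dvd_zero hT
      · refine not_dvd_of_red hred ?_
        have : 3 ^ 1 ≤ 3 ^ (2 * (i + 1)) := Nat.pow_le_pow_right (by norm_num) (by omega)
        omega
  · obtain ⟨t, ht⟩ := T_odd i
    have hred := redX_T (2 * i + 1)
    refine ⟨(Q (2 * i + 1 + 2) - Q (2 * i + 1)) * U (2 * i + 1), T (2 * i + 1), T_monic _,
      ?_, ?_, ?_, not_dvd_of_red hred (by omega)⟩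
    · have hr : (3 + 3 * A * c : Polynomial (Polynomial ℤ)) =
          Polynomial.C (3 * Polynomial.X) * Polynomial.X + Polynomial.C (Polynomial.C 3) := by
        simp [A, c, C_three]; ring
      rw [hr] at ht
      refine irreducible_of_schonemann (T_monic _) (by omega) hred ht ?_ 0 0 ?_
      · exact lt_of_le_of_lt Polynomial.degree_linear_le (by norm_num)
      · simp
    · rw [sub_two_eq]; ring
    · refine ⟨(Q (2 * i + 1 + 1) - Q (2 * i + 1)) * (Q (2 * i + 1 + 2) - Q (2 * i + 1 + 1)) *
        (Q (2 * i + 1 + 2) - Q (2 * i + 1)), ?_⟩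
      rw [mul_pow, sq (Q (2 * i + 1 + 2) - Q (2 * i + 1 + 1))]
      nth_rewrite 2 [sub_one_eq]
      ring

/-! ### Passage to `ℚ[a,b]` -/

/-- The isomorphism `ℚ[a,b] ≃ ℚ[a][c]` with `c = b - a`. -/
noncomputable def e : MvPolynomial (Fin 2) ℚ ≃+* Polynomial (Polynomial ℚ) :=
  RingEquiv.ofRingHom
    (MvPolynomial.eval₂Hom (Polynomial.C.comp Polynomial.C) ![Polynomial.C Polynomial.X,
      Polynomial.X + Polynomial.C Polynomial.X])
    (Polynomial.eval₂RingHom (Polynomial.eval₂RingHom MvPolynomial.C (X 0)) (X 1 - X 0))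
    (by ext <;> simp)
    (by
      apply MvPolynomial.ringHom_ext
      · intro r; simp
      · intro i; fin_cases i <;> simp)

/-- The inclusion `ℤ[a][c] → ℚ[a][c]`. -/
noncomputable def inc : Polynomial (Polynomial ℤ) →+* Polynomial (Polynomial ℚ) :=
  Polynomial.mapRingHom (Polynomial.mapRingHom (Int.castRingHom ℚ))

lemma e_F (k n : ℕ) : e (F k n) = inc (Q (k + n) - Q k) := by
  have h : ∀ m, e (MvPolynomial.map (Int.castRingHom ℚ) (P m)) = inc (Q m) := by
    intro m
    have h1 := map_orb (e.toRingHom.comp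
      (MvPolynomial.map (Int.castRingHom ℚ))) aP bP m
    rw [P_eq_orb, Q, map_orb inc]
    simpa [aP, bP, A, c, inc, e] using h1
  rw [F, map_sub, map_sub, map_sub, h, h]

lemma inc_dvd {H W : Polynomial (Polynomial ℤ)} (hm : H.Monic) (h : inc H ∣ inc W) : H ∣ W :=
  (Polynomial.map_dvd_map _ (Polynomial.map_injective _ Int.cast_injective) hm).1 h

/-- Gauss's lemma: a monic irreducible over `ℤ[a]` stays irreducible over `Frac ℤ[a]`, which
contains `ℚ[a]`. -/
lemma inc_irreducible {H : Polynomial (Polynomial ℤ)} (hm : H.Monic) (h : Irreducible H) :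
    Irreducible (inc H) := by
  let L := FractionRing (Polynomial ℤ)
  let φ : Polynomial ℚ →+* L :=
    Polynomial.eval₂RingHom (algebraMap ℚ L) (algebraMap (Polynomial ℤ) L Polynomial.X)
  refine Polynomial.Monic.irreducible_of_irreducible_map φ _ (hm.map _) ?_
  have hφ : φ.comp (Polynomial.mapRingHom (Int.castRingHom ℚ)) =
      algebraMap (Polynomial ℤ) L := by
    ext <;> simp [φ]
  have : (inc H).map φ = H.map (algebraMap (Polynomial ℤ) L) := by
    rw [← hφ]
    exact Polynomial.map_map _ _ _
  rw [this]
  exact hm.irreducible_iff_irreducible_map_fraction_map.1 h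

end CubicOrbit

/-- Irreducibility of `h_{k,2}` over `ℚ`: up to associates, `f_{k,2}` has exactly one
irreducible factor not dividing `f_{k,1}·f_{k-1,2}`, occurring with multiplicity one. -/
theorem stmt15 (k : ℕ) (hk : 1 ≤ k) :
    (∃ p : MvPolynomial (Fin 2) ℚ,
        Irreducible p ∧ p ∣ F k 2 ∧ ¬ p ∣ F k 1 * F (k - 1) 2) ∧
    (∀ p q : MvPolynomial (Fin 2) ℚ,
        Irreducible p → p ∣ F k 2 → ¬ p ∣ F k 1 * F (k - 1) 2 →
        Irreducible q → q ∣ F k 2 → ¬ q ∣ F k 1 * F (k - 1) 2 →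
        Associated p q) ∧
    (∀ p : MvPolynomial (Fin 2) ℚ,
        Irreducible p → p ∣ F k 2 → ¬ p ∣ F k 1 * F (k - 1) 2 →
        ¬ p ^ 2 ∣ F k 2) := by
  obtain ⟨j, rfl⟩ : ∃ j, k = j + 1 := ⟨k - 1, by omega⟩
  rw [Nat.add_sub_cancel]
  obtain ⟨B, H, hm, hirr, hf, hB, hnd⟩ := CubicOrbit.factorization j
  obtain ⟨B', hB'⟩ := CubicOrbit.e.surjective (CubicOrbit.inc B)
  obtain ⟨h, hh⟩ := CubicOrbit.e.surjective (CubicOrbit.inc H)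
  have hW : CubicOrbit.e (F (j + 1) 1 * F j 2) = CubicOrbit.inc
      ((CubicOrbit.Q (j + 2) - CubicOrbit.Q (j + 1)) * (CubicOrbit.Q (j + 2) - CubicOrbit.Q j)) := by
    rw [map_mul, CubicOrbit.e_F, CubicOrbit.e_F, map_mul]
  have hirr' : Irreducible h := by
    rw [← MulEquiv.irreducible_iff CubicOrbit.e, hh]
    exact CubicOrbit.inc_irreducible hm hirr
  have hF : F (j + 1) 2 = B' * h := by
    apply CubicOrbit.e.injective
    rw [map_mul, hB', hh, ← map_mul, ← hf, CubicOrbit.e_F]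
  have hnd' : ¬ h ∣ F (j + 1) 1 * F j 2 := by
    intro hd
    have := map_dvd CubicOrbit.e hd
    rw [hW, hh] at this
    exact hnd (CubicOrbit.inc_dvd hm this)
  have hB2 : B' ∣ (F (j + 1) 1 * F j 2) ^ 2 := by
    rw [← map_dvd_iff CubicOrbit.e, map_pow, hW, hB', ← map_pow]
    exact map_dvd _ hB
  have key : ∀ p : MvPolynomial (Fin 2) ℚ, Irreducible p → p ∣ F (j + 1) 2 →
      ¬ p ∣ F (j + 1) 1 * F j 2 → Associated p h := by
    intro p hp hpF hpW
    rw [hF] at hpF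
    rcases hp.prime.dvd_or_dvd hpF with h1 | h1
    · exact absurd (hp.prime.dvd_of_dvd_pow (h1.trans hB2)) hpW
    · exact hp.associated_of_dvd hirr' h1
  refine ⟨⟨h, hirr', hF ▸ dvd_mul_left _ _, hnd'⟩, ?_, ?_⟩
  · intro p q hp hpF hpW hq hqF hqW
    exact (key p hp hpF hpW).trans (key q hq hqF hqW).symm
  · intro p hp hpF hpW hp2
    have ha := key p hp hpF hpW
    have h2 : h ^ 2 ∣ B' * h := by
      rw [← hF]
      exact (ha.pow_pow (n := 2)).symm.dvd.trans hp2
    rw [sq] at h2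
    have h3 : h ∣ B' := (mul_dvd_mul_iff_right hirr'.ne_zero).1 h2
    exact hnd' (hirr'.prime.dvd_of_dvd_pow (h3.trans hB2))
end
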